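/- arXiv:2503.22440 — 2 statements merged into one kernel-verified Lean document; each statement's English description precedes it below -/
import Mathlib

section
/- Let f be a long knot and let D be a diagram of f all of whose crossings are transverse double points. Then, taking η = η_ε as specified for each ε, one has lim_{ε→0} I_X(f) = ⟨X, G_D⟩, and for all sufficiently small ε > 0 one has I_Y(f) = 0. -/
open MeasureTheory Filter Topology Set

noncomputable section

abbrev E2 : Type := EuclideanSpace ℝ (Fin 2)
abbrev E3 : Type := EuclideanSpace ℝ (Fin 3)
abbrev E4 : Type := EuclideanSpace ℝ (Fin 4)
abbrev E6 : Type := EuclideanSpace ℝ (Fin 6)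

/-- The point of `ℝ³` with the given coordinates. -/
def mk3 (x y z : ℝ) : E3 := (WithLp.equiv 2 (Fin 3 → ℝ)).symm ![x, y, z]

/-- The north pole `N = (0,0,1)` of `S² ⊆ ℝ³`. -/
def NP : E3 := mk3 0 0 1

/-- Projection of `ℝ³` onto the plane `N^⊥` (the first two coordinates). -/
def pr12 (v : E3) : ℝ × ℝ := (v 0, v 1)

/-- The `N`-coordinate. -/
def pr3 (v : E3) : ℝ := v 2

/-- `unitv v = v / ‖v‖`. -/
def unitv (v : E3) : E3 := ‖v‖⁻¹ • v

/-- Determinant of the projections to `N^⊥` of two vectors (first vector, then second). -/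
def cross2 (a b : E3) : ℝ := a 0 * b 1 - a 1 * b 0

/-- 3×3 determinant (scalar triple product); for `p ∈ S²` and `v, w` tangent to `S²` at
`p`, this is the value of the standard area form of `S²` at `p` on `(v, w)`. -/
def det3 (p v w : E3) : ℝ :=
  p 0 * (v 1 * w 2 - v 2 * w 1) - p 1 * (v 0 * w 2 - v 2 * w 0) +
    p 2 * (v 0 * w 1 - v 1 * w 0)

/-! ### Long knots and 3-component long links -/

/-- A long knot: a smooth embedding `ℝ ↪ ℝ³` which is standard outside `[-1,1]`. -/
def IsLongKnot (f : ℝ → E3) : Prop :=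
  ContDiff ℝ (⊤ : ℕ∞) f ∧ Function.Injective f ∧ (∀ t, deriv f t ≠ 0) ∧
    ∀ x : ℝ, 1 ≤ |x| → f x = mk3 x 0 0

/-- Smooth isotopy of long knots. -/
def KnotIsotopic (f₀ f₁ : ℝ → E3) : Prop :=
  ∃ H : ℝ → ℝ → E3,
    ContDiff ℝ (⊤ : ℕ∞) (fun p : ℝ × ℝ => H p.1 p.2) ∧
    (∀ s, IsLongKnot (H s)) ∧ H 0 = f₀ ∧ H 1 = f₁

/-- A 3-component long link: a smooth embedding `ℝ ⊔ ℝ ⊔ ℝ ↪ ℝ³`, standard outside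
`[-1,1]`, component `k` (for `k = 1,2,3`, i.e. index `i = k - 1 : Fin 3`) having ends
`x ↦ (x, (2 - k)|x|, 0)`. -/
def IsLongLink3 (f : Fin 3 → ℝ → E3) : Prop :=
  (∀ i, ContDiff ℝ (⊤ : ℕ∞) (f i)) ∧
  (∀ i j s t, f i s = f j t → i = j ∧ s = t) ∧
  (∀ i t, deriv (f i) t ≠ 0) ∧
  ∀ i (x : ℝ), 1 ≤ |x| → f i x = mk3 x ((1 - ((i : ℕ) : ℝ)) * |x|) 0

/-- Smooth isotopy of 3-component long links. -/
def LinkIsotopic (f₀ f₁ : Fin 3 → ℝ → E3) : Prop :=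
  ∃ H : ℝ → Fin 3 → ℝ → E3,
    (∀ i, ContDiff ℝ (⊤ : ℕ∞) (fun p : ℝ × ℝ => H p.1 i p.2)) ∧
    (∀ s, IsLongLink3 (H s)) ∧ H 0 = f₀ ∧ H 1 = f₁

/-! ### Diagrams, crossings and Gauss diagram pairings -/

/-- All self-intersections of the projection of the long knot `f` are transverse
(any two branches meeting at a multiple point have independent projected tangents). -/
def TransverseK (f : ℝ → E3) : Prop :=
  ∀ t u, t ≠ u → pr12 (f t) = pr12 (f u) → cross2 (deriv f t) (deriv f u) ≠ 0

/-- The diagram of `f` has only transverse double points. -/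
def OnlyDoubleK (f : ℝ → E3) : Prop :=
  TransverseK f ∧
  ∀ t u v : ℝ, t ≠ u → u ≠ v → t ≠ v →
    pr12 (f t) = pr12 (f u) → pr12 (f u) = pr12 (f v) → False

/-- All self-intersections of the projection of the long link `f` are transverse. -/
def TransverseL (f : Fin 3 → ℝ → E3) : Prop :=
  ∀ i j s t, (i, s) ≠ (j, t) → pr12 (f i s) = pr12 (f j t) →
    cross2 (deriv (f i) s) (deriv (f j) t) ≠ 0

/-- The diagram of the long link `f` has only transverse double points. -/
def OnlyDoubleL (f : Fin 3 → ℝ → E3) : Prop :=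
  TransverseL f ∧
  ∀ i j k s t u, (i, s) ≠ (j, t) → (j, t) ≠ (k, u) → (i, s) ≠ (k, u) →
    pr12 (f i s) = pr12 (f j t) → pr12 (f j t) = pr12 (f k u) → False

/-- Crossings of a long knot diagram: pairs `(t, u)` with `t` on the lower and `u` on the
upper strand; the corresponding chord of the Gauss diagram is directed from `t` to `u`. -/
def CrossingK (f : ℝ → E3) : Set (ℝ × ℝ) :=
  {p | p.1 ≠ p.2 ∧ pr12 (f p.1) = pr12 (f p.2) ∧ pr3 (f p.1) < pr3 (f p.2)}

/-- The sign of the crossing `p = (t, u)` (`+1` iff the projected tangent of the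
over-strand followed by that of the under-strand is a positive basis of `N^⊥`). -/
def csignK (f : ℝ → E3) (p : ℝ × ℝ) : ℝ :=
  Real.sign (cross2 (deriv f p.2) (deriv f p.1))

/-- Gauss diagram pairing for a long knot: the sum, over all pairs of chords of the Gauss
diagram of `f` in the relative position prescribed by `R`, of the products of signs. -/
def pairK (f : ℝ → E3) (R : ℝ × ℝ → ℝ × ℝ → Prop) : ℝ :=
  ∑ᶠ q ∈ {q : (ℝ × ℝ) × (ℝ × ℝ) | q.1 ∈ CrossingK f ∧ q.2 ∈ CrossingK f ∧ R q.1 q.2},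
    csignK f q.1 * csignK f q.2

/-- `⟨X, G_D⟩` : chords `x₁ → x₃` and `x₄ → x₂` with `x₁ < x₂ < x₃ < x₄`. -/
def pairXK (f : ℝ → E3) : ℝ :=
  pairK f fun p q => p.1 < q.2 ∧ q.2 < p.2 ∧ p.2 < q.1

/-- `⟨X′₁, G_D⟩` : chords `a → b` and `c → a` with `a < b < c`. -/
def pairX1K (f : ℝ → E3) : ℝ :=
  pairK f fun p q => q.2 = p.1 ∧ p.1 < p.2 ∧ p.2 < q.1

/-- `⟨X′₂, G_D⟩` : chords `a → b` and `c → b` with `a < b < c`. -/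
def pairX2K (f : ℝ → E3) : ℝ :=
  pairK f fun p q => q.2 = p.2 ∧ p.1 < p.2 ∧ p.2 < q.1

/-- `⟨X′₃, G_D⟩` : chords `a → c` and `c → b` with `a < b < c`. -/
def pairX3K (f : ℝ → E3) : ℝ :=
  pairK f fun p q => p.2 = q.1 ∧ p.1 < q.2 ∧ q.2 < p.2

/-- Crossings of a 3-strand diagram between strand `i` (under) and strand `j` (over);
the corresponding chord is directed from `p.1` on strand `i` to `p.2` on strand `j`. -/
def CrossingL (f : Fin 3 → ℝ → E3) (i j : Fin 3) : Set (ℝ × ℝ) :=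
  {p | pr12 (f i p.1) = pr12 (f j p.2) ∧ pr3 (f i p.1) < pr3 (f j p.2)}

/-- The sign of the crossing `p` between strand `i` (under) and strand `j` (over). -/
def csignL (f : Fin 3 → ℝ → E3) (i j : Fin 3) (p : ℝ × ℝ) : ℝ :=
  Real.sign (cross2 (deriv (f j) p.2) (deriv (f i) p.1))

/-- Gauss diagram pairing for a 3-component long link. -/
def pairL (f : Fin 3 → ℝ → E3) (i₁ j₁ i₂ j₂ : Fin 3) (R : ℝ × ℝ → ℝ × ℝ → Prop) : ℝ :=
  ∑ᶠ q ∈ {q : (ℝ × ℝ) × (ℝ × ℝ) |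
      q.1 ∈ CrossingL f i₁ j₁ ∧ q.2 ∈ CrossingL f i₂ j₂ ∧ R q.1 q.2},
    csignL f i₁ j₁ q.1 * csignL f i₂ j₂ q.2

/-- `⟨𝒳₁, G_D⟩` : a chord from `t` on strand 1 to strand 2, and a chord from strand 3 to
`t′` on strand 1, with `t < t′`. -/
def pairL1 (f : Fin 3 → ℝ → E3) : ℝ := pairL f 0 1 2 0 fun p q => p.1 < q.2

/-- `⟨𝒳₂, G_D⟩` : a chord from strand 1 to `u` on strand 2, and a chord from strand 3 to
`u′` on strand 2, with `u < u′`. -/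
def pairL2 (f : Fin 3 → ℝ → E3) : ℝ := pairL f 0 1 2 1 fun p q => p.2 < q.2

/-- `⟨𝒳₃, G_D⟩` : a chord from strand 1 to `v` on strand 3, and a chord from `v′` on
strand 3 to strand 2, with `v < v′`. -/
def pairL3 (f : Fin 3 → ℝ → E3) : ℝ := pairL f 0 2 2 1 fun p q => p.2 < q.1

/-- `⟨𝒳′₁, G_D⟩` : as `𝒳₁` but with `t = t′` (a triple point). -/
def pairL1' (f : Fin 3 → ℝ → E3) : ℝ := pairL f 0 1 2 0 fun p q => p.1 = q.2

/-- `⟨𝒳′₂, G_D⟩` : as `𝒳₂` but with `u = u′` (a triple point). -/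
def pairL2' (f : Fin 3 → ℝ → E3) : ℝ := pairL f 0 1 2 1 fun p q => p.2 = q.2

/-- `⟨𝒳′₃, G_D⟩` : as `𝒳₃` but with `v = v′` (a triple point). -/
def pairL3' (f : Fin 3 → ℝ → E3) : ℝ := pairL f 0 2 2 1 fun p q => p.2 = q.1

/-! ### The localized unit 2-form `η` on `S²` -/

/-- The action of a 2×2 matrix on `ℝ³ = ℝ² × ℝ`, acting on the first two coordinates. -/
def act2 (A : Matrix (Fin 2) (Fin 2) ℝ) (v : E3) : E3 :=
  mk3 (A 0 0 * v 0 + A 0 1 * v 1) (A 1 0 * v 0 + A 1 1 * v 1) (v 2)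

/-- `IsEtaForm ε g` says that `η = g · (standard area form of S²)` is a smooth 2-form on
`S²` such that: (i) `supp η` lies in the `ε`-neighbourhood of the north pole `N`;
(ii) `φ*η = det φ · η` for every `φ ∈ O(2) ⊆ O(3)` (since `φ* (area form) = det φ ·
(area form)`, this amounts to `g ∘ φ = g`); (iii) `∫_{S²} η = 1`, i.e. the integral of
`g` against the surface measure of `S²` is `1`. -/
def IsEtaForm (ε : ℝ) (g : E3 → ℝ) : Prop :=
  ContDiff ℝ (⊤ : ℕ∞) g ∧
  (∀ v : E3, ‖v‖ = 1 → g v ≠ 0 → ‖v - NP‖ < ε) ∧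
  (∀ A : Matrix (Fin 2) (Fin 2) ℝ, A * A.transpose = 1 →
    ∀ v : E3, ‖v‖ = 1 → g (act2 A v) = g v) ∧
  ∫ v : Metric.sphere (0 : E3) 1, g v ∂((volume : Measure E3).toSphere) = 1

/-! ### Configuration space integrals -/

/-- `i`-th partial derivative of a map `ℝⁿ → ℝ³`. -/
def pdv {n : ℕ} (h : EuclideanSpace ℝ (Fin n) → E3) (i : Fin n)
    (x : EuclideanSpace ℝ (Fin n)) : E3 :=
  fderiv ℝ h x (EuclideanSpace.single i 1)

/-- The pullback `h*η` (for `η = g · (area form)`) evaluated at the point `x` on the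
coordinate vectors `(e_i, e_j)`. -/
def form2 {n : ℕ} (g : E3 → ℝ) (h : EuclideanSpace ℝ (Fin n) → E3)
    (x : EuclideanSpace ℝ (Fin n)) (i j : Fin n) : ℝ :=
  g (h x) * det3 (h x) (pdv h i x) (pdv h j x)

/-- `(h*η ∧ k*η)(e₀, e₁, e₂, e₃)` at `x`. -/
def wedge22 (g : E3 → ℝ) (h k : E4 → E3) (x : E4) : ℝ :=
  (1 / 4) * ∑ σ : Equiv.Perm (Fin 4),
    ((Equiv.Perm.sign σ : ℤ) : ℝ) * form2 g h x (σ 0) (σ 1) * form2 g k x (σ 2) (σ 3)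

/-- `(h*η ∧ k*η ∧ l*η)(e₀, …, e₅)` at `x`. -/
def wedge222 (g : E3 → ℝ) (h k l : E6 → E3) (x : E6) : ℝ :=
  (1 / 8) * ∑ σ : Equiv.Perm (Fin 6),
    ((Equiv.Perm.sign σ : ℤ) : ℝ) * form2 g h x (σ 0) (σ 1) * form2 g k x (σ 2) (σ 3) *
      form2 g l x (σ 4) (σ 5)

/-- The configuration space `C_X = {x₁ < x₂ < x₃ < x₄}`. -/
def CX : Set E4 := {x | x 0 < x 1 ∧ x 1 < x 2 ∧ x 2 < x 3}

/-- The integrand `ω_X = h₁₃*η ∧ h₄₂*η` for a long knot. -/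
def omegaX (f : ℝ → E3) (g : E3 → ℝ) : E4 → ℝ :=
  wedge22 g (fun x => unitv (f (x 2) - f (x 0))) (fun x => unitv (f (x 1) - f (x 3)))

/-- The configuration space integral `I_X(f)` of a long knot. -/
def IX (f : ℝ → E3) (g : E3 → ℝ) : ℝ := ∫ x in CX, omegaX f g x

/-- The free point `x₄ ∈ ℝ³` in a `Y`-configuration `(x₁,x₂,x₃;x₄) ∈ ℝ³ × ℝ³ = ℝ⁶`. -/
def ptY (x : E6) : E3 := mk3 (x 3) (x 4) (x 5)

/-- The configuration space `C_Y(f)` for a long knot. -/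
def CY (f : ℝ → E3) : Set E6 :=
  {x | x 0 < x 1 ∧ x 1 < x 2 ∧ ptY x ≠ f (x 0) ∧ ptY x ≠ f (x 1) ∧ ptY x ≠ f (x 2)}

/-- The integrand `ω_Y = h₁₄*η ∧ h₄₂*η ∧ h₃₄*η` for a long knot. -/
def omegaY (f : ℝ → E3) (g : E3 → ℝ) : E6 → ℝ :=
  wedge222 g (fun x => unitv (ptY x - f (x 0))) (fun x => unitv (f (x 1) - ptY x))
    (fun x => unitv (ptY x - f (x 2)))

/-- The configuration space integral `I_Y(f)` of a long knot. -/
def IY (f : ℝ → E3) (g : E3 → ℝ) : ℝ := ∫ x in CY f, omegaY f g x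

def CL1 : Set E4 := {x | x 0 < x 1}
def CL2 : Set E4 := {x | x 1 < x 2}
def CL3 : Set E4 := {x | x 2 < x 3}

/-- The integrand of `I_{𝒳₁}(f)` for a 3-component long link. -/
def omegaL1 (f : Fin 3 → ℝ → E3) (g : E3 → ℝ) : E4 → ℝ :=
  wedge22 g (fun x => unitv (f 1 (x 2) - f 0 (x 0))) (fun x => unitv (f 2 (x 3) - f 0 (x 1)))

/-- The integrand of `I_{𝒳₂}(f)` for a 3-component long link. -/
def omegaL2 (f : Fin 3 → ℝ → E3) (g : E3 → ℝ) : E4 → ℝ :=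
  wedge22 g (fun x => unitv (f 1 (x 1) - f 0 (x 0))) (fun x => unitv (f 1 (x 2) - f 2 (x 3)))

/-- The integrand of `I_{𝒳₃}(f)` for a 3-component long link. -/
def omegaL3 (f : Fin 3 → ℝ → E3) (g : E3 → ℝ) : E4 → ℝ :=
  wedge22 g (fun x => unitv (f 2 (x 2) - f 0 (x 0))) (fun x => unitv (f 1 (x 1) - f 2 (x 3)))

/-- The configuration space integral `I_{𝒳₁}(f)`. -/
def IL1 (f : Fin 3 → ℝ → E3) (g : E3 → ℝ) : ℝ := ∫ x in CL1, omegaL1 f g x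

/-- The configuration space integral `I_{𝒳₂}(f)`. -/
def IL2 (f : Fin 3 → ℝ → E3) (g : E3 → ℝ) : ℝ := ∫ x in CL2, omegaL2 f g x

/-- The configuration space integral `I_{𝒳₃}(f)`. -/
def IL3 (f : Fin 3 → ℝ → E3) (g : E3 → ℝ) : ℝ := ∫ x in CL3, omegaL3 f g x

/-- The configuration space `C_𝒴(f)` for a 3-component long link. -/
def CYL (f : Fin 3 → ℝ → E3) : Set E6 :=
  {x | ptY x ≠ f 0 (x 0) ∧ ptY x ≠ f 1 (x 1) ∧ ptY x ≠ f 2 (x 2)}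

/-- The integrand `ω_𝒴 = h₁₄*η ∧ h₄₂*η ∧ h₃₄*η` for a 3-component long link. -/
def omegaYL (f : Fin 3 → ℝ → E3) (g : E3 → ℝ) : E6 → ℝ :=
  wedge222 g (fun x => unitv (ptY x - f 0 (x 0))) (fun x => unitv (f 1 (x 1) - ptY x))
    (fun x => unitv (ptY x - f 2 (x 2)))

/-- The configuration space integral `I_𝒴(f)`. -/
def ILY (f : Fin 3 → ℝ → E3) (g : E3 → ℝ) : ℝ := ∫ x in CYL f, omegaYL f g x

/-! ### Model triple points -/

/-- The affine parametrization `t ↦ a + t • v` of a straight segment. -/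
def seg (a v : E3) (t : ℝ) : E3 := a + t • v

/-- A model triple point: three straight segments `S₁, S₂, S₃` (indexed by `0, 1, 2`),
`S_k` parametrized by `seg (a k) (v k) : (-δ, δ) → ℝ³`, all parallel to the plane
`N^⊥`, whose projections to `N^⊥` meet pairwise transversely at the single common point
which is the projection of each midpoint `a k`, and with `S₂` higher than `S₁`, `S₃`. -/
def IsModelTriple (a v : Fin 3 → E3) : Prop :=
  (∀ k, v k 2 = 0) ∧ (∀ k, v k ≠ 0) ∧
  pr12 (a 0) = pr12 (a 1) ∧ pr12 (a 1) = pr12 (a 2) ∧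
  (∀ j k, j ≠ k → cross2 (v j) (v k) ≠ 0) ∧
  a 0 2 < a 1 2 ∧ a 2 2 < a 1 2

/-- A model triple point of type `(←, s₁, s₂, s₃)`: `S₁` passes over `S₃`, and the signs
of the crossings `S₁–S₃`, `S₁–S₂`, `S₂–S₃` are `s₁, s₂, s₃` respectively. -/
def ModelLeft (a v : Fin 3 → E3) (s1 s2 s3 : ℝ) : Prop :=
  IsModelTriple a v ∧ a 2 2 < a 0 2 ∧
  s1 = Real.sign (cross2 (v 0) (v 2)) ∧
  s2 = Real.sign (cross2 (v 1) (v 0)) ∧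
  s3 = Real.sign (cross2 (v 1) (v 2))

/-- A model triple point of type `(→, s₁, s₂, s₃)`: `S₃` passes over `S₁`, and the signs
of the crossings `S₁–S₃`, `S₁–S₂`, `S₂–S₃` are `s₁, s₂, s₃` respectively. -/
def ModelRight (a v : Fin 3 → E3) (s1 s2 s3 : ℝ) : Prop :=
  IsModelTriple a v ∧ a 0 2 < a 2 2 ∧
  s1 = Real.sign (cross2 (v 2) (v 0)) ∧
  s2 = Real.sign (cross2 (v 1) (v 0)) ∧
  s3 = Real.sign (cross2 (v 1) (v 2))

/-- The cube `(-δ, δ)⁴ ⊆ ℝ⁴`. -/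
def cube4 (δ : ℝ) : Set E4 := {x | ∀ i, |x i| < δ}

/-- The model configuration space integral `I_X^{X′₁}`: the two points `t₁ < t₂` lie on
`S₁`, the point `t₃` on `S₂` and the point `t₄` on `S₃`; the maps are
`h₁₃ = unit (f₂(t₃) - f₁(t₁))` and `h₄₂ = unit (f₁(t₂) - f₃(t₄))`. -/
def IX1model (a v : Fin 3 → E3) (δ : ℝ) (g : E3 → ℝ) : ℝ :=
  ∫ x in cube4 δ ∩ {x : E4 | x 0 < x 1},
    wedge22 g (fun x => unitv (seg (a 1) (v 1) (x 2) - seg (a 0) (v 0) (x 0)))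
      (fun x => unitv (seg (a 0) (v 0) (x 1) - seg (a 2) (v 2) (x 3))) x

/-- The model configuration space integral `I_X^{X′₂}` (`(X′₂, l)` for a model of type
`←`, `(X′₂, r)` for a model of type `→`): the two points `t₂ < t₃` lie on `S₂`, the
point `t₁` on `S₁` and the point `t₄` on `S₃`; the maps are
`h₁₃ = unit (f₂(t₃) - f₁(t₁))` and `h₄₂ = unit (f₂(t₂) - f₃(t₄))`. -/
def IX2model (a v : Fin 3 → E3) (δ : ℝ) (g : E3 → ℝ) : ℝ :=
  ∫ x in cube4 δ ∩ {x : E4 | x 1 < x 2},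
    wedge22 g (fun x => unitv (seg (a 1) (v 1) (x 2) - seg (a 0) (v 0) (x 0)))
      (fun x => unitv (seg (a 1) (v 1) (x 1) - seg (a 2) (v 2) (x 3))) x

/-- The model configuration space integral `I_X^{X′₃}`: the two points `t₃ < t₄` lie on
`S₃`, the point `t₁` on `S₁` and the point `t₂` on `S₂`; the maps are
`h₁₃ = unit (f₃(t₃) - f₁(t₁))` and `h₄₂ = unit (f₂(t₂) - f₃(t₄))`. -/
def IX3model (a v : Fin 3 → E3) (δ : ℝ) (g : E3 → ℝ) : ℝ :=
  ∫ x in cube4 δ ∩ {x : E4 | x 2 < x 3},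
    wedge22 g (fun x => unitv (seg (a 2) (v 2) (x 2) - seg (a 0) (v 0) (x 0)))
      (fun x => unitv (seg (a 1) (v 1) (x 1) - seg (a 2) (v 2) (x 3))) x

/-- The model `Y`-integral `I_Y^{s₁,s₂,s₃}` over `(-δ,δ)³ × ℝ³`: the point `t_k` lies on
`S_k` and `x₄ ∈ ℝ³` is free; the maps are `h₁₄ = unit (x₄ - f₁(t₁))`,
`h₄₂ = unit (f₂(t₂) - x₄)` and `h₃₄ = unit (x₄ - f₃(t₃))`. -/
def IYmodel (a v : Fin 3 → E3) (δ : ℝ) (g : E3 → ℝ) : ℝ :=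
  ∫ x in {x : E6 | |x 0| < δ ∧ |x 1| < δ ∧ |x 2| < δ ∧
      ptY x ≠ seg (a 0) (v 0) (x 0) ∧ ptY x ≠ seg (a 1) (v 1) (x 1) ∧
      ptY x ≠ seg (a 2) (v 2) (x 2)},
    wedge222 g (fun x => unitv (ptY x - seg (a 0) (v 0) (x 0)))
      (fun x => unitv (seg (a 1) (v 1) (x 1) - ptY x))
      (fun x => unitv (ptY x - seg (a 2) (v 2) (x 2))) x

/-- Near every (triple or higher) multiple point of the diagram, the strands of the long
knot `f` are straight segments parallel to the plane `N^⊥`. -/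
def StraightNearMultipleK (f : ℝ → E3) : Prop :=
  ∀ t u v : ℝ, t ≠ u → u ≠ v → t ≠ v →
    pr12 (f t) = pr12 (f u) → pr12 (f u) = pr12 (f v) →
    ∃ δ > (0 : ℝ), ∃ w : E3, w 2 = 0 ∧ ∀ s : ℝ, |s - t| < δ → f s = f t + (s - t) • w

/-- Near every (triple or higher) multiple point of the diagram, the strands of the long
link `f` are straight segments parallel to the plane `N^⊥`. -/
def StraightNearMultipleL (f : Fin 3 → ℝ → E3) : Prop :=
  ∀ (i j k : Fin 3) (t u v : ℝ), (i, t) ≠ (j, u) → (j, u) ≠ (k, v) → (i, t) ≠ (k, v) →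
    pr12 (f i t) = pr12 (f j u) → pr12 (f j u) = pr12 (f k v) →
    ∃ δ > (0 : ℝ), ∃ w : E3, w 2 = 0 ∧ ∀ s : ℝ, |s - t| < δ → f i s = f i t + (s - t) • w

/-! ### Closed 2-component links and the linking number -/

/-- A smooth loop in `ℝ³`, parametrized with period 1 and injective on a period. -/
def IsLoop (f : ℝ → E3) : Prop :=
  ContDiff ℝ (⊤ : ℕ∞) f ∧ (∀ t, f (t + 1) = f t) ∧ (∀ t, deriv f t ≠ 0) ∧
    ∀ s t : ℝ, f s = f t → ∃ n : ℤ, t - s = n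

/-- The diagram of the 2-component link `(f 0, f 1)` has only transverse double points. -/
def OnlyDouble2 (f : Fin 2 → ℝ → E3) : Prop :=
  (∀ i j s t, f i s ≠ f j t → pr12 (f i s) = pr12 (f j t) →
      cross2 (deriv (f i) s) (deriv (f j) t) ≠ 0) ∧
  ∀ i j k s t u, f i s ≠ f j t → f j t ≠ f k u → f i s ≠ f k u →
    pr12 (f i s) = pr12 (f j t) → pr12 (f j t) = pr12 (f k u) → False

/-- The crossings of the diagram at which `f₂` passes over `f₁` (one parameter period). -/
def Crossing12 (f₁ f₂ : ℝ → E3) : Set (ℝ × ℝ) :=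
  {p | p.1 ∈ Ico (0 : ℝ) 1 ∧ p.2 ∈ Ico (0 : ℝ) 1 ∧
    pr12 (f₁ p.1) = pr12 (f₂ p.2) ∧ pr3 (f₁ p.1) < pr3 (f₂ p.2)}

/-- The sum of the signs of the crossings of the diagram at which `f₂` passes over `f₁`;
this is the linking number `lk(f₁, f₂)`, i.e. the mapping degree of
`h : S¹ × S¹ → S²`. -/
def lkSum (f₁ f₂ : ℝ → E3) : ℝ :=
  ∑ᶠ p ∈ Crossing12 f₁ f₂, Real.sign (cross2 (deriv f₂ p.2) (deriv f₁ p.1))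

/-- The fundamental domain `[0,1) × [0,1)` of `S¹ × S¹`. -/
def sq01 : Set E2 := {x | x 0 ∈ Ico (0 : ℝ) 1 ∧ x 1 ∈ Ico (0 : ℝ) 1}

/-- `∫_{S¹×S¹} h*η` for `h(x₁,x₂) = unit (f₂(x₂) - f₁(x₁))`. -/
def lkIntegral (f₁ f₂ : ℝ → E3) (g : E3 → ℝ) : ℝ :=
  ∫ x in sq01, form2 g (fun x : E2 => unitv (f₂ (x 1) - f₁ (x 0))) x 0 1

/-!
If `g` is supported near the north pole `N`, the integrands of `I_X` and `I_Y` live on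
configurations all of whose directions are steep. Prolonging secant slopes continuously by tangents
(they stay away from `N` at infinity because the knot is standard there), a compactness argument
shows that steep pairs of chords with `x₁ ≤ x₂ ≤ x₃ ≤ x₄` are close to pairs of crossings forming
the arrow diagram `X`; this uses that all crossings are transverse double points.

For `I_Y`, two steep edges add up to a steep chord, so a tripod with steep edges would give such a
pair of chords with `x₂ = x₃`, which is impossible: the integrand vanishes. For `I_X`, Fubini
reduces the contribution of a pair of crossings to the integral of the pulled back form near a
single crossing. In the gnomonic coordinates around `N` the chord direction is a local
diffeomorphism there whose Jacobian has the sign of the crossing, so this integral is that sign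
times `∫ g`.
-/

theorem dslope_comm {𝕜 E : Type*} [NontriviallyNormedField 𝕜] [NormedAddCommGroup E]
    [NormedSpace 𝕜 E] (f : 𝕜 → E) (s t : 𝕜) : dslope f s t = dslope f t s := by
  rcases eq_or_ne t s with rfl | h
  · rfl
  · rw [dslope_of_ne f h, dslope_of_ne f h.symm, slope_comm]

theorem continuous_dslope {𝕜 E : Type*} [RCLike 𝕜] [NormedAddCommGroup E] [NormedSpace 𝕜 E]
    {f : 𝕜 → E} (hf : ContDiff 𝕜 1 f) : Continuous fun p : 𝕜 × 𝕜 => dslope f p.1 p.2 := by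
  rw [continuous_iff_continuousAt]
  rintro ⟨s, t⟩
  rcases eq_or_ne t s with rfl | hst
  · rw [ContinuousAt, dslope_same, Metric.tendsto_nhds]
    intro ε hε
    have hderiv : ∀ᶠ p : 𝕜 × 𝕜 in 𝓝 (t, t), dist (deriv f p.1) (deriv f t) < ε :=
      Metric.tendsto_nhds.1 (((hf.continuous_deriv le_rfl).comp continuous_fst).tendsto (t, t)) ε hε
    have hslope := (hf.contDiffAt.hasStrictDerivAt (x := t) one_ne_zero).isLittleO.def
      (half_pos hε)
    filter_upwards [hderiv, hslope] with ⟨x, y⟩ hx hxy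
    rcases eq_or_ne y x with rfl | hne
    · simpa only [dslope_same] using hx
    · have hpos : 0 < ‖x - y‖ := norm_pos_iff.2 (sub_ne_zero.2 hne.symm)
      have hsub : f x - f y - (x - y) • deriv f t = (x - y) • (dslope f x y - deriv f t) := by
        rw [smul_sub, dslope_comm, sub_smul_dslope]
      have hle : ‖x - y‖ * ‖dslope f x y - deriv f t‖ ≤ ε / 2 * ‖x - y‖ := by
        simpa [hsub, norm_smul] using hxy
      rw [dist_eq_norm]
      nlinarith
  · have hne : ∀ᶠ p : 𝕜 × 𝕜 in 𝓝 (s, t), p.2 ≠ p.1 :=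
      (isOpen_ne_fun continuous_snd continuous_fst).mem_nhds hst
    have hslope : ContinuousAt (fun p : 𝕜 × 𝕜 => slope f p.1 p.2) (s, t) := by
      simp only [slope_def_module]
      exact ((continuousAt_snd.sub continuousAt_fst).inv₀ (sub_ne_zero.2 hst)).smul
        (by have := hf.continuous; fun_prop)
    exact hslope.congr (hne.mono fun p hp => (dslope_of_ne f hp).symm)

theorem dslope_sub_smul_const {E : Type*} [NormedAddCommGroup E] [NormedSpace ℝ E] {f : ℝ → E}
    (hf : Differentiable ℝ f) (v : E) (s t : ℝ) :
    dslope (fun x => f x - x • v) s t = dslope f s t - v := by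
  rcases eq_or_ne t s with rfl | hts
  · rw [dslope_same, dslope_same]
    simpa using ((hf t).hasDerivAt.fun_sub ((hasDerivAt_id t).smul_const v)).deriv
  · have hsub : t - s ≠ 0 := sub_ne_zero.2 hts
    rw [dslope_of_ne _ hts, dslope_of_ne _ hts, slope_def_module, slope_def_module,
      sub_sub_sub_comm, ← sub_smul, smul_sub, inv_smul_smul₀ hsub]

theorem tendsto_dslope_cocompact_of_hasCompactSupport {E : Type*} [NormedAddCommGroup E]
    [NormedSpace ℝ E] {d : ℝ → E} (hd : Continuous d) (hsupp : HasCompactSupport d) :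
    Tendsto (fun p : ℝ × ℝ => dslope d p.1 p.2) (cocompact (ℝ × ℝ)) (𝓝 0) := by
  obtain ⟨M, hM⟩ := hd.bounded_above_of_compact_support hsupp
  obtain ⟨R, hR⟩ := hsupp.isCompact.isBounded.subset_closedBall 0
  have hzero : ∀ x, R < |x| → x ∉ tsupport d := fun x hx hxd => by
    simpa [hx.not_ge] using hR hxd
  rw [Metric.tendsto_nhds]
  intro ε hε
  have hM0 : 0 ≤ M := (norm_nonneg _).trans (hM 0)
  have key : ∀ s t : ℝ, R + 2 * M / ε < |s| → ‖dslope d s t‖ < ε := by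
    intro s t hs
    have hRs : R < |s| := (le_add_of_nonneg_right (by positivity)).trans_lt hs
    have hds : d s = 0 := image_eq_zero_of_notMem_tsupport (hzero s hRs)
    by_cases ht : t ∈ tsupport d
    · have htR : |t| ≤ R := not_lt.1 fun h => hzero t h ht
      have hdist : 2 * M / ε < |t - s| := by
        linarith [abs_sub_abs_le_abs_sub s t, abs_sub_comm s t]
      have hts : 0 < |t - s| := hdist.trans_le' (by positivity)
      have hmul : |t - s| * ‖dslope d s t‖ ≤ M := by
        simpa [← Real.norm_eq_abs, ← norm_smul, sub_smul_dslope, hds] using hM t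
      rw [div_lt_iff₀ hε] at hdist
      nlinarith [norm_nonneg (dslope d s t)]
    · rcases eq_or_ne t s with rfl | hts
      · have : d =ᶠ[𝓝 t] 0 := notMem_tsupport_iff_eventuallyEq.1 ht
        simpa [this.deriv_eq] using hε
      · simpa [dslope_of_ne d hts, slope_def_module, hds,
          image_eq_zero_of_notMem_tsupport ht] using hε
  have hfar : ∀ᶠ s in cocompact ℝ, R + 2 * M / ε < |s| :=
    (tendsto_norm_cocompact_atTop (E := ℝ)).eventually_gt_atTop _
  rw [← coprod_cocompact, Filter.coprod, eventually_sup]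
  refine ⟨(hfar.comap _).mono fun p hp => ?_, (hfar.comap _).mono fun p hp => ?_⟩
  · simpa using key p.1 p.2 hp
  · simpa [dslope_comm d p.1] using key p.2 p.1 hp

lemma lintegral_comp_smul {E : Type*} [NormedAddCommGroup E] [NormedSpace ℝ E]
    [FiniteDimensional ℝ E] [MeasurableSpace E] [BorelSpace E] (μ : Measure E)
    [μ.IsAddHaarMeasure] {r : ℝ} (hr : r ≠ 0) (h : E → ENNReal) :
    ∫⁻ x, h (r • x) ∂μ = ENNReal.ofReal |(r ^ Module.finrank ℝ E)⁻¹| * ∫⁻ x, h x ∂μ := by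
  rw [← smul_eq_mul, ← lintegral_smul_measure, ← Measure.map_addHaar_smul μ hr]
  exact (lintegral_map_equiv h (Homeomorph.smulOfNeZero r hr).toMeasurableEquiv).symm

lemma lintegral_Ioo_sq {r : ℝ} (hr : 0 ≤ r) :
    ∫⁻ z in Ioo 0 r, ENNReal.ofReal (z ^ 2) = ENNReal.ofReal (r ^ 3 / 3) := by
  have hint : IntegrableOn (fun z : ℝ => z ^ 2) (Ioc 0 r) :=
    ((continuous_pow 2).integrableOn_Icc).mono_set Ioc_subset_Icc_self
  rw [setLIntegral_congr Ioo_ae_eq_Ioc, ← ofReal_integral_eq_lintegral_ofReal hint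
    (ae_of_all _ sq_nonneg), ← intervalIntegral.integral_of_le hr, integral_pow]
  norm_num

lemma measurePreserving_toLp_of_box {α ι : Type*} [MeasureSpace α] [Fintype ι] {T : α → ι → ℝ}
    (hT : Measurable T) (hbox : ∀ s : ι → Set ℝ, volume (T ⁻¹' univ.pi s) = ∏ i, volume (s i)) :
    MeasurePreserving (fun x => WithLp.toLp 2 (T x)) := by
  refine (PiLp.volume_preserving_toLp ι).comp ⟨hT, ?_⟩
  refine (Measure.pi_eq fun s hs => ?_).symm
  rw [Measure.map_apply hT (MeasurableSet.univ_pi hs), hbox]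

lemma det_prod_real (L : ℝ × ℝ →L[ℝ] ℝ × ℝ) :
    L.det = (L (1, 0)).1 * (L (0, 1)).2 - (L (0, 1)).1 * (L (1, 0)).2 := by
  rw [ContinuousLinearMap.det, ← LinearMap.det_toMatrix (.finTwoProd ℝ), Matrix.det_fin_two]
  simp [LinearMap.toMatrix_apply]

lemma sign_div_of_pos {a b : ℝ} (hb : 0 < b) : Real.sign (a / b) = Real.sign a := by
  rcases lt_trichotomy a 0 with ha | rfl | ha
  · rw [Real.sign_of_neg ha, Real.sign_of_neg (div_neg_of_neg_of_pos ha hb)]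
  · rw [zero_div]
  · rw [Real.sign_of_pos ha, Real.sign_of_pos (div_pos ha hb)]

theorem exists_isOpen_injOn_of_det_fderiv_ne_zero {E : Type*} [NormedAddCommGroup E]
    [NormedSpace ℝ E] [FiniteDimensional ℝ E] {F : E → E} {p₀ : E} (hF : ContDiffAt ℝ 1 F p₀)
    (hdet : (fderiv ℝ F p₀).det ≠ 0) {O : Set E} (hO : O ∈ 𝓝 p₀) :
    ∃ U ⊆ O, IsOpen U ∧ p₀ ∈ U ∧ InjOn F U ∧ F '' U ∈ 𝓝 (F p₀) ∧
      ∀ p ∈ U, DifferentiableAt ℝ F p ∧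
        (fderiv ℝ F p).det = Real.sign (fderiv ℝ F p₀).det * |(fderiv ℝ F p).det| := by
  have : CompleteSpace E := FiniteDimensional.complete ℝ E
  let e : E ≃L[ℝ] E := (fderiv ℝ F p₀).toContinuousLinearEquivOfDetNeZero hdet
  have hstrict : HasStrictFDerivAt F (e : E →L[ℝ] E) p₀ := by
    simpa [e] using hF.hasStrictFDerivAt one_ne_zero
  let H := hstrict.toOpenPartialHomeomorph F
  have hHF : (H : E → E) = F := hstrict.toOpenPartialHomeomorph_coe
  have hdetc : ContinuousAt (fun p => (fderiv ℝ F p).det) p₀ :=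
    ContinuousLinearMap.continuous_det.continuousAt.comp
      (hF.fderiv_right (m := 0) le_rfl).continuousAt
  have hsource : ∀ᶠ p in 𝓝 p₀, p ∈ H.source :=
    H.open_source.mem_nhds hstrict.mem_toOpenPartialHomeomorph_source
  have hsign : ∀ᶠ p in 𝓝 p₀,
      (fderiv ℝ F p).det = Real.sign (fderiv ℝ F p₀).det * |(fderiv ℝ F p).det| := by
    rcases hdet.lt_or_gt with hneg | hpos
    · filter_upwards [hdetc.eventually (gt_mem_nhds hneg)] with p hp
      rw [Real.sign_of_neg hneg, abs_of_neg hp, neg_one_mul, neg_neg]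
    · filter_upwards [hdetc.eventually (lt_mem_nhds hpos)] with p hp
      rw [Real.sign_of_pos hpos, abs_of_pos hp, one_mul]
  have hdiff : ∀ᶠ p in 𝓝 p₀, DifferentiableAt ℝ F p :=
    (hF.eventually (by simp)).mono fun p hp => hp.differentiableAt one_ne_zero
  obtain ⟨U, hU, hUo, hpU⟩ := eventually_nhds_iff.1 <|
    hsource.and <| (eventually_mem_set.2 hO).and <| hdiff.and hsign
  have himage : IsOpen (F '' U) :=
    hHF ▸ H.isOpen_image_of_subset_source hUo fun p hp => (hU p hp).1
  exact ⟨U, fun p hp => (hU p hp).2.1, hUo, hpU, hHF ▸ H.injOn.mono fun p hp => (hU p hp).1,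
    himage.mem_nhds (mem_image_of_mem F hpU), fun p hp => (hU p hp).2.2⟩

theorem exists_isOpen_setIntegral_det_fderiv_smul_comp {E V : Type*} [NormedAddCommGroup E]
    [NormedSpace ℝ E] [FiniteDimensional ℝ E] [MeasurableSpace E] [BorelSpace E]
    (μ : Measure E) [μ.IsAddHaarMeasure] [NormedAddCommGroup V] [NormedSpace ℝ V]
    {F : E → E} {p₀ : E} (hF : ContDiffAt ℝ 1 F p₀) (hdet : (fderiv ℝ F p₀).det ≠ 0)
    {O : Set E} (hO : O ∈ 𝓝 p₀) :
    ∃ U ⊆ O, IsOpen U ∧ p₀ ∈ U ∧ ∀ᶠ s in (𝓝 (F p₀)).smallSets, ∀ ρ : E → V,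
      Integrable ρ μ → Function.support ρ ⊆ s →
        IntegrableOn (fun p => (fderiv ℝ F p).det • ρ (F p)) U μ ∧
          ∫ p in U, (fderiv ℝ F p).det • ρ (F p) ∂μ =
            Real.sign (fderiv ℝ F p₀).det • ∫ y, ρ y ∂μ := by
  obtain ⟨U, hUO, hUo, hpU, hinj, himage, hU⟩ :=
    exists_isOpen_injOn_of_det_fderiv_ne_zero hF hdet hO
  have hderiv : ∀ p ∈ U, HasFDerivWithinAt F (fderiv ℝ F p) U p := fun p hp =>
    (hU p hp).1.hasFDerivAt.hasFDerivWithinAt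
  refine ⟨U, hUO, hUo, hpU, eventually_smallSets.2 ⟨F '' U, himage, fun s hs ρ hρ hρs => ?_⟩⟩
  have habs : EqOn (fun p => (fderiv ℝ F p).det • ρ (F p))
      (fun p => Real.sign (fderiv ℝ F p₀).det • |(fderiv ℝ F p).det| • ρ (F p)) U := fun p hp => by
    simp only [smul_smul, ← (hU p hp).2]
  rw [integrableOn_congr_fun habs hUo.measurableSet,
    setIntegral_congr_fun hUo.measurableSet habs, integral_smul,
    ← integral_image_eq_integral_abs_det_fderiv_smul μ hUo.measurableSet hderiv hinj,
    setIntegral_eq_integral_of_forall_compl_eq_zero fun y hy =>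
      of_not_not fun h => hy (hs (hρs h))]
  exact ⟨((integrableOn_image_iff_integrableOn_abs_det_fderiv_smul μ hUo.measurableSet hderiv hinj
    ρ).1 hρ.integrableOn).smul _, rfl⟩

theorem eventually_setIntegral_eq_finsum_mem {α ι V : Type*} [TopologicalSpace α] [T2Space α]
    [MeasurableSpace α] [OpensMeasurableSpace α] {μ : Measure α} [NormedAddCommGroup V]
    [NormedSpace ℝ V] {l : Filter ι} {h : ι → α → V} {c : ι → α → V}
    {S C : Set α} (hS : S.Finite) (hC : IsOpen C) (hSC : S ⊆ C)
    (hloc : ∀ q ∈ S, ∀ O ∈ 𝓝 q, ∃ W ⊆ O, IsOpen W ∧ q ∈ W ∧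
      ∀ᶠ i in l, IntegrableOn (h i) W μ ∧ ∫ x in W, h i x ∂μ = c i q)
    (hvan : ∀ U, IsOpen U → S ⊆ U → ∀ᶠ i in l, ∀ x ∈ C \ U, h i x = 0) :
    ∀ᶠ i in l, ∫ x in C, h i x ∂μ = ∑ᶠ q ∈ S, c i q := by
  obtain ⟨D, hD, hdisj⟩ := hS.t2_separation
  have hloc' := fun q : S => hloc q q.2 (D q ∩ C)
    (inter_mem ((hD q).2.mem_nhds (hD q).1) (hC.mem_nhds (hSC q.2)))
  choose W hWDC hWo hqW hW using hloc'
  have := hS.to_subtype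
  have := Fintype.ofFinite S
  have hvanW := hvan (⋃ q, W q) (isOpen_iUnion hWo) fun q hq => mem_iUnion.2 ⟨⟨q, hq⟩, hqW _⟩
  filter_upwards [hvanW, eventually_all.2 hW] with i hzero hint
  have hdisjW : Pairwise fun q r : S => Disjoint (W q) (W r) := fun q r hqr =>
    (hdisj q.2 r.2 (Subtype.coe_ne_coe.2 hqr)).mono
      ((hWDC q).trans inter_subset_left) ((hWDC r).trans inter_subset_left)
  calc ∫ x in C, h i x ∂μ = ∫ x in ⋃ q, W q, h i x ∂μ :=
        setIntegral_eq_of_subset_of_forall_sdiff_eq_zero hC.measurableSet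
          (iUnion_subset fun q => (hWDC q).trans inter_subset_right) hzero
    _ = ∑ q : S, ∫ x in W q, h i x ∂μ :=
        integral_iUnion_fintype (fun q => (hWo q).measurableSet) hdisjW fun q => (hint q).1
    _ = ∑ᶠ q ∈ S, c i q := by
        simp only [fun q => (hint q).2, finsum_mem_eq_finite_toFinset_sum _ hS]
        exact (Finset.sum_subtype _ (fun q => hS.mem_toFinset) (c i)).symm

/-! ### Steep vectors -/

@[simp] lemma mk3_apply_zero (x y z : ℝ) : mk3 x y z 0 = x := rfl
@[simp] lemma mk3_apply_one (x y z : ℝ) : mk3 x y z 1 = y := rfl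
@[simp] lemma mk3_apply_two (x y z : ℝ) : mk3 x y z 2 = z := rfl

lemma E3.ext {v w : E3} (h0 : v 0 = w 0) (h1 : v 1 = w 1) (h2 : v 2 = w 2) : v = w :=
  PiLp.ext fun i => by fin_cases i; exacts [h0, h1, h2]

lemma pr12_sub_eq_zero {v w : E3} : pr12 (v - w) = 0 ↔ pr12 v = pr12 w := by
  simp [pr12, Prod.ext_iff, sub_eq_zero]

lemma norm_unitv {v : E3} (hv : v ≠ 0) : ‖unitv v‖ = 1 := norm_smul_inv_norm (𝕜 := ℝ) hv

lemma unitv_smul {c : ℝ} (hc : 0 < c) (v : E3) : unitv (c • v) = unitv v := by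
  rw [unitv, unitv, norm_smul, Real.norm_of_nonneg hc.le, smul_smul, mul_inv_rev, mul_assoc,
    inv_mul_cancel₀ hc.ne', mul_one]

/-- `v` points upwards and makes a small angle, controlled by the slope `e`, with the vertical
axis. The degenerate case `e = 0` says that `v` is vertical; the vector `0` is always steep. -/
def Steep (e : ℝ) (v : E3) : Prop := 0 ≤ v 2 ∧ |v 0| ≤ e * v 2 ∧ |v 1| ≤ e * v 2

lemma Steep.mono {e e' : ℝ} {v : E3} (h : Steep e v) (hee' : e ≤ e') : Steep e' v :=
  have hle := mul_le_mul_of_nonneg_right hee' h.1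
  ⟨h.1, h.2.1.trans hle, h.2.2.trans hle⟩

lemma Steep.add {e : ℝ} {v w : E3} (hv : Steep e v) (hw : Steep e w) : Steep e (v + w) := by
  obtain ⟨hv2, hv0, hv1⟩ := hv
  obtain ⟨hw2, hw0, hw1⟩ := hw
  refine ⟨add_nonneg hv2 hw2, ?_, ?_⟩ <;> rw [PiLp.add_apply, PiLp.add_apply, mul_add]
  exacts [(abs_add_le _ _).trans (add_le_add hv0 hw0), (abs_add_le _ _).trans (add_le_add hv1 hw1)]

lemma steep_smul_iff {e c : ℝ} (hc : 0 < c) {v : E3} : Steep e (c • v) ↔ Steep e v := by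
  simp only [Steep, PiLp.smul_apply, smul_eq_mul, abs_mul, abs_of_pos hc, mul_left_comm e c,
    mul_le_mul_iff_of_pos_left hc, mul_nonneg_iff_of_pos_left hc]

lemma steep_zero_iff {v : E3} : Steep 0 v ↔ 0 ≤ v 2 ∧ pr12 v = 0 := by
  simp [Steep, pr12]

lemma Steep.pos {e : ℝ} {v : E3} (h : Steep e v) (hv : v ≠ 0) : 0 < v 2 := by
  refine h.1.lt_of_ne' fun h2 => hv (E3.ext ?_ ?_ h2)
  · simpa [h2] using h.2.1
  · simpa [h2] using h.2.2

lemma Steep.eq_zero {e : ℝ} {v : E3} (h : Steep e v) (hneg : Steep e (-v)) : v = 0 := by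
  by_contra hv
  exact (h.pos hv).not_ge (by simpa using hneg.1)

lemma Steep.abs_zero_le_abs_two {e : ℝ} {v : E3} (h : Steep e v) (he : e ≤ 1) :
    |v 0| ≤ |v 2| := by
  simpa [abs_of_nonneg h.1] using (h.mono he).2.1

lemma isClosed_setOf_steep : IsClosed {p : ℝ × E3 | Steep p.1 p.2} := by
  refine IsClosed.and ?_ (IsClosed.and ?_ ?_) <;> exact isClosed_le (by fun_prop) (by fun_prop)

lemma eventually_nhds_steep {e : ℝ} (he : 0 < e) : ∀ᶠ v in 𝓝 NP, Steep e v := by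
  have h2 : ∀ᶠ v : E3 in 𝓝 NP, 0 < v 2 :=
    (isOpen_lt continuous_const (by fun_prop)).mem_nhds (by simp [NP])
  have h0 : ∀ᶠ v : E3 in 𝓝 NP, |v 0| < e * v 2 :=
    (isOpen_lt (by fun_prop) (by fun_prop)).mem_nhds (by simpa [NP] using he)
  have h1 : ∀ᶠ v : E3 in 𝓝 NP, |v 1| < e * v 2 :=
    (isOpen_lt (by fun_prop) (by fun_prop)).mem_nhds (by simpa [NP] using he)
  filter_upwards [h0, h1, h2] with v h0 h1 h2 using ⟨h2.le, h0.le, h1.le⟩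

/-- The filter of densities on `S²` that are supported close to the north pole; "for all
sufficiently small `ε` and all `η` supported in the `ε`-neighbourhood of `N`" is
`∀ᶠ g in polarFilter`. -/
def polarFilter : Filter (E3 → ℝ) :=
  comap (fun g => {v | ‖v‖ = 1 ∧ g v ≠ 0}) (𝓝 NP).smallSets

lemma eventually_polarFilter_iff {P : (E3 → ℝ) → Prop} :
    (∀ᶠ g in polarFilter, P g) ↔
      ∃ ε > 0, ∀ g : E3 → ℝ, (∀ v, ‖v‖ = 1 → g v ≠ 0 → ‖v - NP‖ < ε) → P g := by
  simp only [polarFilter, (Metric.nhds_basis_ball.smallSets.comap _).eventually_iff,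
    mem_preimage, mem_powerset_iff, subset_def, mem_ofPred_eq, and_imp, mem_ball_iff_norm]

lemma eventually_polarFilter_unitv {P : E3 → Prop} (hP : ∀ᶠ v in 𝓝 NP, P v) :
    ∀ᶠ g in polarFilter, ∀ v ≠ 0, g (unitv v) ≠ 0 → P (unitv v) :=
  ((eventually_smallSets_forall.2 hP).comap _).mono fun _ hg _ hv hgv =>
    hg _ ⟨norm_unitv hv, hgv⟩

lemma eventually_polarFilter_steep {e : ℝ} (he : 0 < e) :
    ∀ᶠ g in polarFilter, ∀ v ≠ 0, g (unitv v) ≠ 0 → Steep e v :=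
  (eventually_polarFilter_unitv (eventually_nhds_steep he)).mono fun _ hg v hv hgv =>
    (steep_smul_iff (inv_pos.2 (norm_pos_iff.2 hv))).1 (hg v hv hgv)

/-! ### Steep pairs of chords -/

section SteepPairs
variable {f : ℝ → E3} {R : ℝ}

lemma tendsto_dslope_cocompact (hf : ContDiff ℝ 1 f) (hend : ∀ x, R ≤ |x| → f x = mk3 x 0 0) :
    Tendsto (fun p : ℝ × ℝ => dslope f p.1 p.2) (cocompact (ℝ × ℝ)) (𝓝 (mk3 1 0 0)) := by
  have hline : ∀ x : ℝ, mk3 x 0 0 = x • mk3 1 0 0 := fun x => E3.ext (by simp) (by simp) (by simp)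
  have hsupp : HasCompactSupport fun x => f x - x • mk3 1 0 0 :=
    .intro (isCompact_closedBall (0 : ℝ) R) fun x hx => by
      rw [hend x (by simpa using (not_le.1 fun h => hx (by simpa using h)).le), hline, sub_self]
  have hcont : Continuous fun x => f x - x • mk3 1 0 0 := by
    have := hf.continuous
    fun_prop
  simpa [dslope_sub_smul_const (hf.differentiable one_ne_zero)] using
    (tendsto_dslope_cocompact_of_hasCompactSupport hcont hsupp).add_const (mk3 1 0 0)

lemma exists_isCompact_forall_steep_dslope (hf : ContDiff ℝ 1 f)
    (hend : ∀ x, R ≤ |x| → f x = mk3 x 0 0) :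
    ∃ K : Set (ℝ × ℝ), IsCompact K ∧ ∀ e ≤ 1, ∀ s t,
      Steep e (dslope f s t) ∨ Steep e (-dslope f s t) → (s, t) ∈ K := by
  have hflat : ∀ᶠ v : E3 in 𝓝 (mk3 1 0 0), |v 2| < v 0 :=
    (isOpen_lt (by fun_prop) (by fun_prop)).mem_nhds (by simp)
  obtain ⟨K, hK, hKf⟩ := mem_cocompact.1 ((tendsto_dslope_cocompact hf hend).eventually hflat)
  refine ⟨K, hK, fun e he s t h => by_contra fun hst => ?_⟩
  have hv : |dslope f s t 2| < dslope f s t 0 := hKf hst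
  have hle : |dslope f s t 0| ≤ |dslope f s t 2| := by
    rcases h with h | h
    · exact h.abs_zero_le_abs_two he
    · simpa using h.abs_zero_le_abs_two he
  exact (hv.trans_le (le_abs_self _)).not_ge hle

lemma steep_dslope_iff {e s t : ℝ} (hst : s < t) :
    Steep e (dslope f s t) ↔ Steep e (f t - f s) := by
  rw [← sub_smul_dslope, steep_smul_iff (sub_pos.2 hst)]

lemma steep_neg_dslope_iff {e s t : ℝ} (hst : s < t) :
    Steep e (-dslope f s t) ↔ Steep e (f s - f t) := by
  rw [← neg_sub (f t), ← sub_smul_dslope, ← smul_neg, steep_smul_iff (sub_pos.2 hst)]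

lemma pr12_eq_of_steep_zero {s t : ℝ} (h : Steep 0 (f t - f s)) : pr12 (f s) = pr12 (f t) :=
  (pr12_sub_eq_zero.1 (steep_zero_iff.1 h).2).symm

lemma mem_CrossingK_iff (hinj : Function.Injective f) {s t : ℝ} :
    (s, t) ∈ CrossingK f ↔ s ≠ t ∧ Steep 0 (f t - f s) := by
  refine and_congr_right fun hst => ⟨fun ⟨h, hlt⟩ => ?_, fun h =>
    ⟨pr12_eq_of_steep_zero h, sub_pos.1 (h.pos (sub_ne_zero.2 (hinj.ne hst.symm)))⟩⟩
  exact steep_zero_iff.2 ⟨sub_nonneg.2 hlt.le, pr12_sub_eq_zero.2 h.symm⟩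

lemma TransverseK.pr12_deriv_ne_zero (hT : TransverseK f) {s t : ℝ} (hst : s ≠ t)
    (h : pr12 (f s) = pr12 (f t)) : pr12 (deriv f s) ≠ 0 := fun h0 => by
  obtain ⟨h0 : deriv f s 0 = 0, h1 : deriv f s 1 = 0⟩ := Prod.ext_iff.1 h0
  exact hT s t hst h (by rw [cross2, h0, h1, zero_mul, zero_mul, sub_zero])

/-- `dslope f b b` is the tangent, so coinciding parameters are covered as well: the diagram has
neither a vertical tangent at a crossing nor a triple point. -/
lemma OnlyDoubleK.not_steep_zero_neg (hD : OnlyDoubleK f) (himm : ∀ t, deriv f t ≠ 0) {a b c : ℝ}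
    (hab : a ≤ b) (hbc : b ≤ c) (h : Steep 0 (dslope f a b)) : ¬Steep 0 (-dslope f b c) := by
  intro h'
  rcases hab.eq_or_lt with rfl | hab <;> rcases hbc.eq_or_lt with rfl | hbc
  · rw [dslope_same] at h h'
    exact himm a (h.eq_zero h')
  · rw [dslope_same] at h
    rw [steep_neg_dslope_iff hbc] at h'
    exact hD.1.pr12_deriv_ne_zero hbc.ne (pr12_eq_of_steep_zero h').symm (steep_zero_iff.1 h).2
  · rw [dslope_same] at h'
    rw [steep_dslope_iff hab] at h
    exact hD.1.pr12_deriv_ne_zero hab.ne' (pr12_eq_of_steep_zero h).symm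
      (by simpa [pr12] using (steep_zero_iff.1 h').2)
  · rw [steep_dslope_iff hab] at h
    rw [steep_neg_dslope_iff hbc] at h'
    exact hD.2 a b c hab.ne hbc.ne (hab.trans hbc).ne (pr12_eq_of_steep_zero h)
      (pr12_eq_of_steep_zero h').symm

/-- Quadruples `x₁ < x₂ < x₃ < x₄`, grouped into chords as `((x₁, x₃), (x₄, x₂))`: the relative
position of the two chords of the arrow diagram `X`. -/
def interlaced : Set ((ℝ × ℝ) × (ℝ × ℝ)) := {q | q.1.1 < q.2.2 ∧ q.2.2 < q.1.2 ∧ q.1.2 < q.2.1}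

/-- The closure `x₁ ≤ x₂ ≤ x₃ ≤ x₄` of `interlaced`. -/
def weaklyInterlaced : Set ((ℝ × ℝ) × (ℝ × ℝ)) :=
  {q | q.1.1 ≤ q.2.2 ∧ q.2.2 ≤ q.1.2 ∧ q.1.2 ≤ q.2.1}

lemma isOpen_interlaced : IsOpen interlaced :=
  IsOpen.and (isOpen_lt (by fun_prop) (by fun_prop))
    (IsOpen.and (isOpen_lt (by fun_prop) (by fun_prop)) (isOpen_lt (by fun_prop) (by fun_prop)))

lemma isClosed_weaklyInterlaced : IsClosed weaklyInterlaced :=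
  IsClosed.and (isClosed_le (by fun_prop) (by fun_prop))
    (IsClosed.and (isClosed_le (by fun_prop) (by fun_prop))
      (isClosed_le (by fun_prop) (by fun_prop)))

/-- Pairs of chords `((x₁, x₃), (x₄, x₂))` pointing, for `x₁ < x₃` and `x₂ < x₄`, up to slope `e`
towards the north pole. Secants replace chords in order to include `x₁ = x₃` and `x₂ = x₄`. -/
def steepPairs (f : ℝ → E3) (e : ℝ) : Set ((ℝ × ℝ) × (ℝ × ℝ)) :=
  {q | Steep e (dslope f q.1.1 q.1.2) ∧ Steep e (-dslope f q.2.1 q.2.2)}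

/-- The pairs of chords of the Gauss diagram of `f` that form a subdiagram `X`. -/
def crossingPairsX (f : ℝ → E3) : Set ((ℝ × ℝ) × (ℝ × ℝ)) :=
  {q | q.1 ∈ CrossingK f ∧ q.2 ∈ CrossingK f ∧ q ∈ interlaced}

lemma isClosed_setOf_mem_steepPairs (hf : ContDiff ℝ 1 f) :
    IsClosed {p : ℝ × ((ℝ × ℝ) × (ℝ × ℝ)) | p.2 ∈ steepPairs f p.1} := by
  have h := continuous_dslope hf
  have h₁ : Continuous fun p : ℝ × ((ℝ × ℝ) × (ℝ × ℝ)) => (p.1, dslope f p.2.1.1 p.2.1.2) :=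
    continuous_fst.prodMk (h.comp (continuous_fst.comp continuous_snd))
  have h₂ : Continuous fun p : ℝ × ((ℝ × ℝ) × (ℝ × ℝ)) => (p.1, -dslope f p.2.2.1 p.2.2.2) :=
    continuous_fst.prodMk (h.comp (continuous_snd.comp continuous_snd)).neg
  exact (isClosed_setOf_steep.preimage h₁).inter (isClosed_setOf_steep.preimage h₂)

lemma weaklyInterlaced_inter_steepPairs_zero (hinj : Function.Injective f)
    (himm : ∀ t, deriv f t ≠ 0) (hD : OnlyDoubleK f) :
    weaklyInterlaced ∩ steepPairs f 0 = crossingPairsX f := by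
  ext ⟨⟨x₁, x₃⟩, x₄, x₂⟩
  constructor
  · rintro ⟨⟨h12, h23, h34⟩, h13, h42⟩
    dsimp only at h12 h23 h34 h13 h42
    rw [dslope_comm] at h42
    have hx23 : x₂ < x₃ := h23.lt_of_ne fun h => by
      subst h
      exact hD.not_steep_zero_neg himm h12 h34 h13 h42
    rw [steep_dslope_iff (h12.trans_lt hx23)] at h13
    rw [steep_neg_dslope_iff (hx23.trans_le h34)] at h42
    have hcross₁ : (x₁, x₃) ∈ CrossingK f :=
      (mem_CrossingK_iff hinj).2 ⟨(h12.trans_lt hx23).ne, h13⟩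
    have hcross₂ : (x₄, x₂) ∈ CrossingK f :=
      (mem_CrossingK_iff hinj).2 ⟨(hx23.trans_le h34).ne', h42⟩
    have hx12 : x₁ < x₂ := h12.lt_of_ne fun h => by
      subst h
      have hx34 : x₃ ≠ x₄ := fun h => by
        subst h
        exact hcross₁.2.2.not_gt hcross₂.2.2
      exact hD.2 x₃ x₁ x₄ hx23.ne' hcross₂.1.symm hx34 hcross₁.2.1.symm hcross₂.2.1.symm
    have hx34 : x₃ < x₄ := h34.lt_of_ne fun h => by
      subst h
      exact hD.2 x₁ x₃ x₂ hcross₁.1 hcross₂.1 hx12.ne hcross₁.2.1 hcross₂.2.1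
    exact ⟨hcross₁, hcross₂, hx12, hx23, hx34⟩
  · rintro ⟨hcross₁, hcross₂, h12, h23, h34⟩
    rw [mem_CrossingK_iff hinj] at hcross₁ hcross₂
    refine ⟨⟨h12.le, h23.le, h34.le⟩, (steep_dslope_iff (h12.trans h23)).2 hcross₁.2, ?_⟩
    rw [dslope_comm]
    exact (steep_neg_dslope_iff (h23.trans h34)).2 hcross₂.2

lemma exists_isCompact_steepPairs_subset (hf : ContDiff ℝ 1 f)
    (hend : ∀ x, R ≤ |x| → f x = mk3 x 0 0) :
    ∃ K, IsCompact K ∧ ∀ e ≤ 1, steepPairs f e ⊆ K := by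
  obtain ⟨K, hK, hKf⟩ := exists_isCompact_forall_steep_dslope hf hend
  exact ⟨K ×ˢ K, hK.prod hK, fun e he q hq =>
    ⟨hKf e he _ _ (.inl hq.1), hKf e he _ _ (.inr hq.2)⟩⟩

lemma exists_pos_steepPairs_subset (hf : ContDiff ℝ 1 f) (hinj : Function.Injective f)
    (himm : ∀ t, deriv f t ≠ 0) (hend : ∀ x, R ≤ |x| → f x = mk3 x 0 0) (hD : OnlyDoubleK f)
    {U : Set ((ℝ × ℝ) × (ℝ × ℝ))} (hU : IsOpen U) (hXU : crossingPairsX f ⊆ U) :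
    ∃ e > 0, weaklyInterlaced ∩ steepPairs f e ⊆ U := by
  obtain ⟨K, hK, hKf⟩ := exists_isCompact_steepPairs_subset hf hend
  have hbad : IsCompact (K ∩ (weaklyInterlaced ∩ Uᶜ)) :=
    hK.inter_right (isClosed_weaklyInterlaced.inter hU.isClosed_compl)
  have hnot : ∀ᶠ e in 𝓝 (0 : ℝ), ∀ q ∈ K ∩ (weaklyInterlaced ∩ Uᶜ), q ∉ steepPairs f e :=
    hbad.eventually_forall_of_forall_eventually fun q hq =>
      (isClosed_setOf_mem_steepPairs hf).isOpen_compl.mem_nhds fun hq0 =>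
        hq.2.2 (hXU (weaklyInterlaced_inter_steepPairs_zero hinj himm hD ▸ ⟨hq.2.1, hq0⟩))
  obtain ⟨e, ⟨hne, hlt⟩, hpos⟩ := (((hnot.and (gt_mem_nhds one_pos)).filter_mono
    nhdsWithin_le_nhds).and (self_mem_nhdsWithin (s := Ioi (0 : ℝ)))).exists
  exact ⟨e, hpos, fun q hq => of_not_not fun hqU =>
    hne q ⟨hKf e hlt.le hq.2, hq.1, hqU⟩ hq.2⟩

lemma isCompact_crossingPairsX (hf : ContDiff ℝ 1 f) (hinj : Function.Injective f)
    (himm : ∀ t, deriv f t ≠ 0) (hend : ∀ x, R ≤ |x| → f x = mk3 x 0 0) (hD : OnlyDoubleK f) :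
    IsCompact (crossingPairsX f) := by
  obtain ⟨K, hK, hKf⟩ := exists_isCompact_steepPairs_subset hf hend
  rw [← weaklyInterlaced_inter_steepPairs_zero hinj himm hD]
  refine hK.of_isClosed_subset (isClosed_weaklyInterlaced.inter ?_)
    (inter_subset_right.trans (hKf 0 zero_le_one))
  exact (isClosed_setOf_mem_steepPairs hf).preimage (by fun_prop : Continuous fun q => ((0 : ℝ), q))

lemma wedge222_ne_zero {g : E3 → ℝ} {h k l : E6 → E3} {x : E6}
    (hw : wedge222 g h k l x ≠ 0) : g (h x) ≠ 0 ∧ g (k x) ≠ 0 ∧ g (l x) ≠ 0 := by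
  refine ⟨?_, ?_, ?_⟩ <;> exact fun h0 => hw (by simp [wedge222, form2, h0])

/-- If all edges of the tripod are steep, then so are the sums `x₂ - x₁` and `x₂ - x₃` of two of
them; these form a degenerate configuration of the shape `X`, which is excluded. -/
theorem eventually_polarFilter_IY_eq_zero (hf : ContDiff ℝ 1 f) (hinj : Function.Injective f)
    (himm : ∀ t, deriv f t ≠ 0) (hend : ∀ x, R ≤ |x| → f x = mk3 x 0 0) (hD : OnlyDoubleK f) :
    ∀ᶠ g in polarFilter, IY f g = 0 := by
  obtain ⟨e, he, hsub⟩ := exists_pos_steepPairs_subset hf hinj himm hend hD isOpen_interlaced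
    fun q hq => hq.2.2
  filter_upwards [eventually_polarFilter_steep he] with g hg
  refine setIntegral_eq_zero_of_forall_eq_zero fun x ⟨h12, h23, hp₁, hp₂, hp₃⟩ => ?_
  by_contra hω
  obtain ⟨hg₁, hg₂, hg₃⟩ := wedge222_ne_zero hω
  have hup₁ : Steep e (f (x 1) - f (x 0)) := by
    simpa using (hg _ (sub_ne_zero.2 hp₂.symm) hg₂).add (hg _ (sub_ne_zero.2 hp₁) hg₁)
  have hup₃ : Steep e (f (x 1) - f (x 2)) := by
    simpa using (hg _ (sub_ne_zero.2 hp₂.symm) hg₂).add (hg _ (sub_ne_zero.2 hp₃) hg₃)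
  have hmem : ((x 0, x 1), (x 2, x 1)) ∈ interlaced :=
    hsub ⟨⟨h12.le, le_rfl, h23.le⟩, (steep_dslope_iff h12).2 hup₁, by
      rw [dslope_comm]
      exact (steep_neg_dslope_iff h23).2 hup₃⟩
  exact lt_irrefl _ hmem.2.1

end SteepPairs

/-! ### Gnomonic coordinates on the sphere -/

lemma continuous_mk3 : Continuous fun q : (ℝ × ℝ) × ℝ => mk3 q.1.1 q.1.2 q.2 := by
  refine (PiLp.continuous_toLp 2 _).comp (continuous_pi fun i => ?_)
  fin_cases i <;> dsimp <;> fun_prop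

lemma measurePreserving_mk3 :
    MeasurePreserving fun q : (ℝ × ℝ) × ℝ => mk3 q.1.1 q.1.2 q.2 := by
  refine measurePreserving_toLp_of_box (T := fun q : (ℝ × ℝ) × ℝ => ![q.1.1, q.1.2, q.2])
    (measurable_pi_iff.2 fun i => by fin_cases i <;> dsimp <;> fun_prop) fun s => ?_
  have hpre : (fun q : (ℝ × ℝ) × ℝ => ![q.1.1, q.1.2, q.2]) ⁻¹' univ.pi s =
      (s 0 ×ˢ s 1) ×ˢ s 2 := by
    ext q
    simp [Fin.forall_fin_succ, and_assoc]
  rw [hpre, Measure.volume_eq_prod, Measure.prod_prod, Measure.volume_eq_prod, Measure.prod_prod,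
    Fin.prod_univ_three]

/-- The inverse of gnomonic projection: it lifts a point of `N^⊥` to the plane tangent to `S²` at
the north pole. -/
def planeLift (p : ℝ × ℝ) : E3 := mk3 p.1 p.2 1

lemma continuous_planeLift : Continuous planeLift :=
  continuous_mk3.comp (by fun_prop : Continuous fun p : ℝ × ℝ => (p, (1 : ℝ)))

lemma planeLift_ne_zero (p : ℝ × ℝ) : planeLift p ≠ 0 := fun h => by
  simpa [planeLift] using congrArg (· 2) h

lemma mk3_smul (z : ℝ) (p : ℝ × ℝ) : mk3 (z • p).1 (z • p).2 z = z • planeLift p :=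
  E3.ext rfl rfl (mul_one z).symm

lemma setLIntegral_upper_half_space {F : E3 → ENNReal} (hF : Measurable F) :
    ∫⁻ x in {x | 0 < x 2}, F x =
      ∫⁻ p, ∫⁻ z in Ioi 0, ENNReal.ofReal (z ^ 2) * F (z • planeLift p) := by
  have hmeas := continuous_mk3.measurable
  have hlift := continuous_planeLift.measurable
  rw [← measurePreserving_mk3.setLIntegral_comp_preimage
    (measurableSet_lt measurable_const (by fun_prop)) hF]
  have hpre : (fun q : (ℝ × ℝ) × ℝ => mk3 q.1.1 q.1.2 q.2) ⁻¹' {x | 0 < x 2} = univ ×ˢ Ioi 0 := by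
    ext q
    simp
  rw [hpre, Measure.volume_eq_prod, ← Measure.prod_restrict, Measure.restrict_univ,
    lintegral_prod_symm' _ (by fun_prop)]
  refine Eq.trans (setLIntegral_congr_fun measurableSet_Ioi fun z (hz : 0 < z) => ?_)
    (lintegral_lintegral_swap ?_)
  · have hscale := lintegral_comp_smul volume hz.ne' fun p : ℝ × ℝ => F (mk3 p.1 p.2 z)
    simp only [mk3_smul, Module.finrank_prod, Module.finrank_self, one_add_one_eq_two] at hscale
    rw [lintegral_const_mul _ (by fun_prop), hscale, ← mul_assoc,
      ← ENNReal.ofReal_mul (sq_nonneg z), abs_of_pos (by positivity),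
      mul_inv_cancel₀ (by positivity), ENNReal.ofReal_one, one_mul]
  · exact Measurable.aemeasurable (by unfold Function.uncurry; fun_prop)

/-- The surface measure of the unit sphere `S² ⊂ ℝ³`. -/
abbrev areaS2 : Measure (Metric.sphere (0 : E3) 1) := (volume : Measure E3).toSphere

/-- Central projection of the plane tangent to `S²` at the north pole to the open upper
hemisphere. -/
def centralProj (p : ℝ × ℝ) : Metric.sphere (0 : E3) 1 :=
  ⟨unitv (planeLift p), mem_sphere_zero_iff_norm.2 (norm_unitv (planeLift_ne_zero p))⟩

/-- The gnomonic projection: central projection of the open upper half space to the plane tangent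
to `S²` at the north pole, identified with `N^⊥`. -/
def gnomonic (v : E3) : ℝ × ℝ := (v 0 / v 2, v 1 / v 2)

lemma smul_planeLift_gnomonic {v : E3} (hv : v 2 ≠ 0) : v 2 • planeLift (gnomonic v) = v := by
  apply E3.ext <;> simp [planeLift, gnomonic, mul_div_cancel₀ _ hv]

lemma gnomonic_smul_planeLift {z : ℝ} (hz : z ≠ 0) (p : ℝ × ℝ) :
    gnomonic (z • planeLift p) = p := by
  simp [gnomonic, planeLift, hz]

lemma unitv_planeLift_gnomonic {v : E3} (hv : 0 < v 2) :
    unitv (planeLift (gnomonic v)) = unitv v := by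
  rw [← unitv_smul hv, smul_planeLift_gnomonic hv.ne']

lemma gnomonic_unitv_planeLift (p : ℝ × ℝ) : gnomonic (unitv (planeLift p)) = p :=
  gnomonic_smul_planeLift (inv_ne_zero (norm_ne_zero_iff.2 (planeLift_ne_zero p))) p

lemma measurableEmbedding_centralProj : MeasurableEmbedding centralProj := by
  have hcont : Continuous centralProj := by
    have hn (p : ℝ × ℝ) : ‖planeLift p‖ ≠ 0 := norm_ne_zero_iff.2 (planeLift_ne_zero p)
    have := continuous_planeLift
    exact Continuous.subtype_mk (by unfold unitv; fun_prop (disch := assumption)) _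
  have hinj : Function.LeftInverse (fun v => gnomonic v.1) centralProj := gnomonic_unitv_planeLift
  exact hcont.measurableEmbedding hinj.injective

lemma unitv_coe_sphere (v : Metric.sphere (0 : E3) 1) : unitv v = v := by
  rw [unitv, norm_eq_of_mem_sphere, inv_one, one_smul]

lemma centralProj_gnomonic_coe {v : Metric.sphere (0 : E3) 1} (hv : 0 < v.1 2) :
    centralProj (gnomonic v) = v :=
  Subtype.ext <| (unitv_planeLift_gnomonic hv).trans (unitv_coe_sphere v)

lemma measurable_gnomonic : Measurable gnomonic := by
  unfold gnomonic
  fun_prop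

open scoped Pointwise in
lemma Ioo_smul_upper_hemisphere (s : Set (Metric.sphere (0 : E3) 1)) :
    Ioo (0 : ℝ) 1 • ((↑) '' (s ∩ {v | 0 < v.1 2}) : Set E3) =
      {x | ‖x‖ < 1 ∧ centralProj (gnomonic x) ∈ s} ∩ {x | 0 < x 2} := by
  ext x
  constructor
  · rintro ⟨r, ⟨hr0, hr1⟩, -, ⟨v, ⟨hvs, hv⟩, rfl⟩, rfl⟩
    have hproj : centralProj (gnomonic (r • v.1)) = v := by
      have : gnomonic (r • v.1) = gnomonic v := by simp [gnomonic, mul_div_mul_left, hr0.ne']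
      rw [this, centralProj_gnomonic_coe hv]
    refine ⟨⟨?_, ?_⟩, mul_pos hr0 hv⟩
    · simpa [norm_smul, abs_of_pos hr0] using hr1
    · simpa [hproj] using hvs
  · rintro ⟨⟨hx1, hxs⟩, hx2 : 0 < x 2⟩
    have hx : x ≠ 0 := by
      rintro rfl
      simp at hx2
    have hnx : 0 < ‖x‖ := norm_pos_iff.2 hx
    have hproj : (centralProj (gnomonic x) : E3) = ‖x‖⁻¹ • x := unitv_planeLift_gnomonic hx2
    refine ⟨‖x‖, ⟨hnx, hx1⟩, _, ⟨_, ⟨hxs, ?_⟩, rfl⟩, ?_⟩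
    · rw [mem_ofPred_eq, hproj]
      exact mul_pos (inv_pos.2 hnx) hx2
    · simp [hproj, smul_smul, hnx.ne']

lemma lintegral_radial_slice (s : Set (Metric.sphere (0 : E3) 1)) (p : ℝ × ℝ) :
    ∫⁻ z in Ioi 0, ENNReal.ofReal (z ^ 2) *
        {x | ‖x‖ < 1 ∧ centralProj (gnomonic x) ∈ s}.indicator 1 (z • planeLift p) =
      (centralProj ⁻¹' s).indicator (fun p => ENNReal.ofReal ((‖planeLift p‖ ^ 3)⁻¹ / 3)) p := by
  have hn : 0 < ‖planeLift p‖ := norm_pos_iff.2 (planeLift_ne_zero p)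
  have hmem {z : ℝ} (hz : 0 < z) :
      z • planeLift p ∈ {x | ‖x‖ < 1 ∧ centralProj (gnomonic x) ∈ s} ↔
        z < ‖planeLift p‖⁻¹ ∧ centralProj p ∈ s := by
    rw [mem_ofPred_eq, gnomonic_smul_planeLift hz.ne', norm_smul, Real.norm_of_nonneg hz.le,
      ← lt_div_iff₀ hn, one_div]
  by_cases hp : p ∈ centralProj ⁻¹' s
  · calc _ = ∫⁻ z in Ioi 0, (Iio ‖planeLift p‖⁻¹).indicator (fun z => ENNReal.ofReal (z ^ 2)) z :=
          setLIntegral_congr_fun measurableSet_Ioi fun z hz => by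
            simp [indicator, hmem hz, mem_preimage.1 hp]
      _ = _ := by
        rw [setLIntegral_indicator measurableSet_Iio, inter_comm, Ioi_inter_Iio,
          lintegral_Ioo_sq (by positivity), indicator_of_mem hp, inv_pow]
  · rw [indicator_of_notMem hp]
    refine (setLIntegral_congr_fun measurableSet_Ioi fun z hz => ?_).trans lintegral_zero
    rw [indicator_of_notMem fun h => hp ((hmem hz).1 h).2, mul_zero]

lemma areaS2_inter_upper_hemisphere {s : Set (Metric.sphere (0 : E3) 1)} (hs : MeasurableSet s) :
    areaS2 (s ∩ {v | 0 < v.1 2}) =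
      ∫⁻ p in centralProj ⁻¹' s, ENNReal.ofReal (‖planeLift p‖ ^ 3)⁻¹ := by
  have hB : MeasurableSet {x | ‖x‖ < 1 ∧ centralProj (gnomonic x) ∈ s} :=
    (measurableSet_lt measurable_norm measurable_const).inter
      (measurableEmbedding_centralProj.measurable.comp measurable_gnomonic hs)
  rw [Measure.toSphere_apply' _ (hs.inter (measurableSet_lt measurable_const (by fun_prop))),
    Ioo_smul_upper_hemisphere, ← Measure.restrict_apply hB, ← lintegral_indicator_one hB,
    setLIntegral_upper_half_space (measurable_one.indicator hB)]
  simp only [lintegral_radial_slice]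
  rw [lintegral_indicator (measurableEmbedding_centralProj.measurable hs),
    ← lintegral_const_mul' _ _ (by simp)]
  refine lintegral_congr fun p => ?_
  rw [finrank_euclideanSpace_fin, ← ENNReal.ofReal_natCast, ← ENNReal.ofReal_mul (by positivity)]
  push_cast
  rw [mul_div_cancel₀ _ three_ne_zero]

lemma map_centralProj :
    (volume.withDensity fun p => ENNReal.ofReal (‖planeLift p‖ ^ 3)⁻¹).map centralProj =
      areaS2.restrict {v | 0 < v.1 2} := by
  ext s hs
  rw [Measure.map_apply measurableEmbedding_centralProj.measurable hs, Measure.restrict_apply hs,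
    areaS2_inter_upper_hemisphere hs,
    withDensity_apply _ (measurableEmbedding_centralProj.measurable hs)]

/-- The density `η` on `S²` written in the gnomonic coordinates around the north pole. -/
def gnomonicDensity (g : E3 → ℝ) (p : ℝ × ℝ) : ℝ := g (unitv (planeLift p)) / ‖planeLift p‖ ^ 3

lemma gnomonicDensity_eq_smul (g : E3 → ℝ) (p : ℝ × ℝ) : gnomonicDensity g p =
    (ENNReal.ofReal (‖planeLift p‖ ^ 3)⁻¹).toReal • g (centralProj p) := by
  rw [ENNReal.toReal_ofReal (by positivity), smul_eq_mul, inv_mul_eq_div]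
  rfl

lemma measurable_ofReal_norm_planeLift :
    Measurable fun p => ENNReal.ofReal (‖planeLift p‖ ^ 3)⁻¹ := by
  have := continuous_planeLift.measurable
  fun_prop

lemma integrable_gnomonicDensity {g : E3 → ℝ}
    (hg : Integrable (fun v : Metric.sphere (0 : E3) 1 => g v) areaS2) :
    Integrable (gnomonicDensity g) := by
  have hup := hg.integrableOn (s := {v | 0 < v.1 2})
  rw [IntegrableOn, ← map_centralProj, measurableEmbedding_centralProj.integrable_map_iff,
    integrable_withDensity_iff_integrable_smul' measurable_ofReal_norm_planeLift
      (ae_of_all _ fun _ => ENNReal.ofReal_lt_top)] at hup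
  exact hup.congr (ae_of_all _ fun p => (gnomonicDensity_eq_smul g p).symm)

lemma integral_gnomonicDensity {g : E3 → ℝ} (hg : ∀ v ≠ 0, g (unitv v) ≠ 0 → 0 < v 2) :
    ∫ p, gnomonicDensity g p = ∫ v : Metric.sphere (0 : E3) 1, g v ∂areaS2 := by
  simp_rw [gnomonicDensity_eq_smul]
  rw [← integral_withDensity_eq_integral_toReal_smul measurable_ofReal_norm_planeLift
      (ae_of_all _ fun _ => ENNReal.ofReal_lt_top) fun p => g (centralProj p),
    ← measurableEmbedding_centralProj.integral_map fun v : Metric.sphere (0 : E3) 1 => g v,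
    map_centralProj]
  refine setIntegral_eq_integral_of_forall_compl_eq_zero fun v hv => ?_
  by_contra hgv
  exact hv (hg v (ne_zero_of_mem_unit_sphere v) (by rwa [unitv_coe_sphere]))

lemma eventually_polarFilter_support_gnomonicDensity_subset {s : Set (ℝ × ℝ)} (hs : s ∈ 𝓝 0) :
    ∀ᶠ g in polarFilter, Function.support (gnomonicDensity g) ⊆ s := by
  have hcont : ContinuousAt gnomonic NP :=
    have h2 : NP 2 ≠ 0 := one_ne_zero
    ContinuousAt.prodMk (by fun_prop (disch := assumption)) (by fun_prop (disch := assumption))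
  have hNP : gnomonic NP = 0 := by simp [gnomonic, NP]
  filter_upwards [eventually_polarFilter_unitv (hcont (hNP ▸ hs))] with g hg p hp
  have hgp : g (unitv (planeLift p)) ≠ 0 := fun h => hp (by rw [gnomonicDensity, h, zero_div])
  simpa only [mem_preimage, gnomonic_unitv_planeLift] using hg _ (planeLift_ne_zero p) hgp

/-- The derivative of `gnomonic` at `v`. -/
def gnomonicDeriv (v : E3) : E3 →L[ℝ] ℝ × ℝ :=
  let x (i : Fin 3) : E3 →L[ℝ] ℝ := EuclideanSpace.proj i
  (v 2 ^ 2)⁻¹ • (v 2 • x 0 - v 0 • x 2).prod (v 2 • x 1 - v 1 • x 2)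

lemma gnomonicDeriv_apply (v w : E3) : gnomonicDeriv v w =
    ((v 2 ^ 2)⁻¹ * (v 2 * w 0 - v 0 * w 2), (v 2 ^ 2)⁻¹ * (v 2 * w 1 - v 1 * w 2)) := rfl

lemma gnomonicDeriv_wedge {v : E3} (hv : v 2 ≠ 0) (a b : E3) :
    (gnomonicDeriv v a).1 * (gnomonicDeriv v b).2 - (gnomonicDeriv v b).1 * (gnomonicDeriv v a).2 =
      det3 v a b / v 2 ^ 3 := by
  simp only [gnomonicDeriv_apply, det3]
  field_simp
  ring

lemma hasFDerivAt_gnomonic {v : E3} (hv : v 2 ≠ 0) : HasFDerivAt gnomonic (gnomonicDeriv v) v := by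
  have hcoord (i : Fin 3) : HasFDerivAt (fun v : E3 => v i)
      (EuclideanSpace.proj i : E3 →L[ℝ] ℝ) v :=
    (EuclideanSpace.proj i : E3 →L[ℝ] ℝ).hasFDerivAt
  have hinv := (hasDerivAt_inv hv).hasFDerivAt.comp v (hcoord 2)
  have hquot (i : Fin 3) : HasFDerivAt (fun v : E3 => v i / v 2) ((v 2 ^ 2)⁻¹ •
      (v 2 • EuclideanSpace.proj i - v i • EuclideanSpace.proj 2) : E3 →L[ℝ] ℝ) v := by
    refine ((hcoord i).mul hinv).congr_fderiv (ContinuousLinearMap.ext fun w => ?_)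
    simp only [Function.comp_apply, add_apply, sub_apply, smul_apply, PiLp.proj_apply,
      ContinuousLinearMap.comp_apply, ContinuousLinearMap.toSpanSingleton_apply, smul_eq_mul]
    field_simp
    ring
  exact (hquot 0).prodMk (hquot 1)

lemma contDiffAt_gnomonic {v : E3} (hv : v 2 ≠ 0) : ContDiffAt ℝ 1 gnomonic v := by
  have hcoord (i : Fin 3) : ContDiffAt ℝ 1 (fun v : E3 => v i) v :=
    (EuclideanSpace.proj i : E3 →L[ℝ] ℝ).contDiff.contDiffAt
  exact ((hcoord 0).div (hcoord 2) hv).prodMk ((hcoord 1).div (hcoord 2) hv)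

lemma gnomonic_eq_zero_of_pr12_eq_zero {v : E3} (hv : pr12 v = 0) : gnomonic v = 0 := by
  obtain ⟨h0 : v 0 = 0, h1 : v 1 = 0⟩ := Prod.ext_iff.1 hv
  rw [gnomonic, h0, h1, zero_div, Prod.mk_zero_zero]

lemma det3_neg_of_pr12_eq_zero {v : E3} (hv : pr12 v = 0) (a b : E3) :
    det3 v (-a) b = v 2 * cross2 b a := by
  obtain ⟨h0 : v 0 = 0, h1 : v 1 = 0⟩ := Prod.ext_iff.1 hv
  simp only [det3, cross2, h0, h1, PiLp.neg_apply]
  ring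

/-! ### Chords in gnomonic coordinates -/

section GnomonicChord
variable {f : ℝ → E3} {R : ℝ}

/-- The gnomonic projection of the chord of `f` that starts at `f p.1` and ends at `f p.2`. -/
def gnomonicChord (f : ℝ → E3) (p : ℝ × ℝ) : ℝ × ℝ := gnomonic (f p.2 - f p.1)

lemma contDiffAt_gnomonicChord (hf : ContDiff ℝ 1 f) {p : ℝ × ℝ} (hp : (f p.2 - f p.1) 2 ≠ 0) :
    ContDiffAt ℝ 1 (gnomonicChord f) p :=
  have hchord : ContDiff ℝ 1 fun p : ℝ × ℝ => f p.2 - f p.1 := by fun_prop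
  (contDiffAt_gnomonic hp).comp p hchord.contDiffAt

lemma det_fderiv_gnomonicChord (hf : Differentiable ℝ f) {p : ℝ × ℝ}
    (hp : (f p.2 - f p.1) 2 ≠ 0) : (fderiv ℝ (gnomonicChord f) p).det =
      det3 (f p.2 - f p.1) (-deriv f p.1) (deriv f p.2) / (f p.2 - f p.1) 2 ^ 3 := by
  have hchord := ((hf p.2).hasDerivAt.hasFDerivAt.comp p hasFDerivAt_snd).sub
    ((hf p.1).hasDerivAt.hasFDerivAt.comp p hasFDerivAt_fst)
  have hcomp : HasFDerivAt (gnomonicChord f) _ p := (hasFDerivAt_gnomonic hp).comp p hchord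
  rw [hcomp.fderiv, det_prod_real, ← gnomonicDeriv_wedge hp]
  simp only [ContinuousLinearMap.comp_apply, sub_apply, ContinuousLinearMap.coe_fst',
    ContinuousLinearMap.coe_snd', ContinuousLinearMap.toSpanSingleton_apply, one_smul, zero_smul,
    sub_zero, zero_sub]

lemma gnomonicChord_of_mem_CrossingK {p : ℝ × ℝ} (hp : p ∈ CrossingK f) :
    gnomonicChord f p = 0 :=
  gnomonic_eq_zero_of_pr12_eq_zero (pr12_sub_eq_zero.2 hp.2.1.symm)

lemma height_pos_of_mem_CrossingK {p : ℝ × ℝ} (hp : p ∈ CrossingK f) : 0 < (f p.2 - f p.1) 2 :=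
  sub_pos.2 hp.2.2

lemma det_fderiv_gnomonicChord_of_mem_CrossingK (hf : Differentiable ℝ f) {p : ℝ × ℝ}
    (hp : p ∈ CrossingK f) : (fderiv ℝ (gnomonicChord f) p).det =
      cross2 (deriv f p.2) (deriv f p.1) / (f p.2 - f p.1) 2 ^ 2 := by
  have hz := (height_pos_of_mem_CrossingK hp).ne'
  rw [det_fderiv_gnomonicChord hf hz, det3_neg_of_pr12_eq_zero (pr12_sub_eq_zero.2 hp.2.1.symm),
    pow_succ', mul_div_mul_left _ _ hz]

lemma sign_det_fderiv_gnomonicChord (hf : Differentiable ℝ f) {p : ℝ × ℝ}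
    (hp : p ∈ CrossingK f) : Real.sign (fderiv ℝ (gnomonicChord f) p).det = csignK f p := by
  rw [det_fderiv_gnomonicChord_of_mem_CrossingK hf hp,
    sign_div_of_pos (pow_pos (height_pos_of_mem_CrossingK hp) 2), csignK]

lemma TransverseK.det_fderiv_gnomonicChord_ne_zero (hT : TransverseK f) (hf : Differentiable ℝ f)
    {p : ℝ × ℝ} (hp : p ∈ CrossingK f) : (fderiv ℝ (gnomonicChord f) p).det ≠ 0 := by
  rw [det_fderiv_gnomonicChord_of_mem_CrossingK hf hp]
  exact div_ne_zero (hT _ _ hp.1.symm hp.2.1.symm)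
    (pow_ne_zero 2 (height_pos_of_mem_CrossingK hp).ne')

lemma exists_isOpen_inter_CrossingK_subset (hf : ContDiff ℝ 1 f) (hT : TransverseK f)
    {p : ℝ × ℝ} (hp : p ∈ CrossingK f) : ∃ U, IsOpen U ∧ p ∈ U ∧ U ∩ CrossingK f ⊆ {p} := by
  obtain ⟨U, -, hU, hpU, hinj, -⟩ := exists_isOpen_injOn_of_det_fderiv_ne_zero
    (contDiffAt_gnomonicChord hf (height_pos_of_mem_CrossingK hp).ne')
    (hT.det_fderiv_gnomonicChord_ne_zero (hf.differentiable one_ne_zero) hp) univ_mem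
  refine ⟨U, hU, hpU, fun q hq => hinj hq.1 hpU ?_⟩
  rw [gnomonicChord_of_mem_CrossingK hp, gnomonicChord_of_mem_CrossingK hq.2]

lemma finite_crossingPairsX (hf : ContDiff ℝ 1 f) (hinj : Function.Injective f)
    (himm : ∀ t, deriv f t ≠ 0) (hend : ∀ x, R ≤ |x| → f x = mk3 x 0 0) (hD : OnlyDoubleK f) :
    (crossingPairsX f).Finite := by
  refine (isCompact_crossingPairsX hf hinj himm hend hD).finite
    (isDiscrete_iff_forall_mem_exists_isOpen.2 fun q hq => ?_)
  obtain ⟨U, hU, hqU, hUs⟩ := exists_isOpen_inter_CrossingK_subset hf hD.1 hq.1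
  obtain ⟨V, hV, hqV, hVs⟩ := exists_isOpen_inter_CrossingK_subset hf hD.1 hq.2.1
  refine ⟨U ×ˢ V, hU.prod hV, Subset.antisymm ?_ (singleton_subset_iff.2 ⟨⟨hqU, hqV⟩, hq⟩)⟩
  exact fun r hr => Prod.ext (hUs ⟨hr.1.1, hr.2.1⟩) (hVs ⟨hr.1.2, hr.2.2.1⟩)

/-- The pullback of `η` under the direction of the chord from `f p.1` to `f p.2`, as a density in
the two parameters. -/
def chordDensity (f : ℝ → E3) (g : E3 → ℝ) (p : ℝ × ℝ) : ℝ :=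
  g (unitv (f p.2 - f p.1)) *
    (det3 (f p.2 - f p.1) (-deriv f p.1) (deriv f p.2) / ‖f p.2 - f p.1‖ ^ 3)

lemma chordDensity_eq_det_fderiv_smul (hf : Differentiable ℝ f) (g : E3 → ℝ) {p : ℝ × ℝ}
    (hp : 0 < (f p.2 - f p.1) 2) : chordDensity f g p =
      (fderiv ℝ (gnomonicChord f) p).det • gnomonicDensity g (gnomonicChord f p) := by
  have hnorm : ‖f p.2 - f p.1‖ = (f p.2 - f p.1) 2 * ‖planeLift (gnomonicChord f p)‖ := by
    conv_lhs => rw [← smul_planeLift_gnomonic hp.ne', norm_smul, Real.norm_of_nonneg hp.le]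
    rfl
  have hunit : unitv (planeLift (gnomonicChord f p)) = unitv (f p.2 - f p.1) :=
    unitv_planeLift_gnomonic hp
  rw [chordDensity, det_fderiv_gnomonicChord hf hp.ne', gnomonicDensity, hunit, hnorm, smul_eq_mul]
  field_simp

theorem exists_isOpen_setIntegral_chordDensity (hf : ContDiff ℝ 1 f) (hT : TransverseK f)
    {p₀ : ℝ × ℝ} (hp₀ : p₀ ∈ CrossingK f) {O : Set (ℝ × ℝ)} (hO : O ∈ 𝓝 p₀) :
    ∃ U ⊆ O, IsOpen U ∧ p₀ ∈ U ∧ ∀ᶠ g in polarFilter,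
      Integrable (fun v : Metric.sphere (0 : E3) 1 => g v) areaS2 →
        IntegrableOn (chordDensity f g) U ∧
          ∫ p in U, chordDensity f g p =
            csignK f p₀ * ∫ v : Metric.sphere (0 : E3) 1, g v ∂areaS2 := by
  have hdiff := hf.differentiable one_ne_zero
  have hup : {p : ℝ × ℝ | 0 < (f p.2 - f p.1) 2} ∈ 𝓝 p₀ :=
    (isOpen_lt continuous_const (by fun_prop)).mem_nhds (height_pos_of_mem_CrossingK hp₀)
  obtain ⟨U, hUO, hU, hpU, hint⟩ := exists_isOpen_setIntegral_det_fderiv_smul_comp (V := ℝ) volume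
    (contDiffAt_gnomonicChord hf (height_pos_of_mem_CrossingK hp₀).ne')
    (hT.det_fderiv_gnomonicChord_ne_zero hdiff hp₀) (inter_mem hO hup)
  rw [gnomonicChord_of_mem_CrossingK hp₀, sign_det_fderiv_gnomonicChord hdiff hp₀] at hint
  obtain ⟨s, hs, hint⟩ := eventually_smallSets.1 hint
  refine ⟨U, fun p hp => (hUO hp).1, hU, hpU, ?_⟩
  filter_upwards [eventually_polarFilter_support_gnomonicDensity_subset hs,
    eventually_polarFilter_steep one_pos] with g hgs hsteep hg
  have hEq : EqOn (chordDensity f g) _ U := fun p hp =>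
    chordDensity_eq_det_fderiv_smul hdiff g (hUO hp).2
  rw [integrableOn_congr_fun hEq hU.measurableSet, setIntegral_congr_fun hU.measurableSet hEq,
    ← integral_gnomonicDensity fun v hv hgv => (hsteep v hv hgv).pos hv]
  exact hint s Subset.rfl _ (integrable_gnomonicDensity hg) hgs

end GnomonicChord

/-! ### The integrand of `I_X` in chord coordinates -/

section PullbackForm
variable {n : ℕ} {D : EuclideanSpace ℝ (Fin n) → E3} {x : EuclideanSpace ℝ (Fin n)}

lemma det3_smul_add_smul (l a b : ℝ) (p v w : E3) :
    det3 (l • p) (l • v + a • p) (l • w + b • p) = l ^ 3 * det3 p v w := by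
  simp only [det3, PiLp.smul_apply, PiLp.add_apply, smul_eq_mul]
  ring

lemma exists_pdv_unitv (hd : DifferentiableAt ℝ D x) (hne : D x ≠ 0) (i : Fin n) :
    ∃ a : ℝ, pdv (fun y => unitv (D y)) i x = ‖D x‖⁻¹ • pdv D i x + a • D x := by
  have hc : DifferentiableAt ℝ (fun y => ‖D y‖⁻¹) x :=
    (hd.norm ℝ hne).inv (norm_ne_zero_iff.2 hne)
  have hderiv : fderiv ℝ (fun y => unitv (D y)) x = _ :=
    (hc.hasFDerivAt.smul hd.hasFDerivAt).fderiv
  exact ⟨fderiv ℝ (fun y => ‖D y‖⁻¹) x (EuclideanSpace.single i 1), by simp [pdv, hderiv]⟩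

lemma form2_unitv (g : E3 → ℝ) (hd : DifferentiableAt ℝ D x) (hne : D x ≠ 0) (i j : Fin n) :
    form2 g (fun y => unitv (D y)) x i j =
      g (unitv (D x)) * (det3 (D x) (pdv D i x) (pdv D j x) / ‖D x‖ ^ 3) := by
  obtain ⟨a, ha⟩ := exists_pdv_unitv hd hne i
  obtain ⟨b, hb⟩ := exists_pdv_unitv hd hne j
  rw [form2, ha, hb]
  simp only [unitv, det3_smul_add_smul]
  rw [inv_pow, inv_mul_eq_div]

end PullbackForm

section ChordForm
variable {n : ℕ} {f : ℝ → E3} {x : EuclideanSpace ℝ (Fin n)}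

lemma hasFDerivAt_comp_coord (hf : Differentiable ℝ f) (a : Fin n) :
    HasFDerivAt (fun y : EuclideanSpace ℝ (Fin n) => f (y a))
      ((EuclideanSpace.proj a : EuclideanSpace ℝ (Fin n) →L[ℝ] ℝ).smulRight (deriv f (x a))) x := by
  convert! (hf (x a)).hasDerivAt.hasFDerivAt.comp x
    (EuclideanSpace.proj a : EuclideanSpace ℝ (Fin n) →L[ℝ] ℝ).hasFDerivAt

lemma pdv_chord (hf : Differentiable ℝ f) (a b i : Fin n) :
    pdv (fun y : EuclideanSpace ℝ (Fin n) => f (y b) - f (y a)) i x =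
      (if b = i then deriv f (x b) else 0) - (if a = i then deriv f (x a) else 0) := by
  rw [pdv, ((hasFDerivAt_comp_coord hf b).fun_sub (hasFDerivAt_comp_coord hf a)).fderiv]
  simp

/-- The value of `dx_a ∧ dx_b` on the coordinate vectors `(e_i, e_j)`, for `a ≠ b`. -/
def coordForm2 (a b i j : Fin n) : ℤ :=
  if i = a ∧ j = b then 1 else if i = b ∧ j = a then -1 else 0

lemma form2_chord (g : E3 → ℝ) (hf : Differentiable ℝ f) {a b : Fin n} (hab : a ≠ b)
    (hne : f (x a) ≠ f (x b)) (i j : Fin n) :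
    form2 g (fun y => unitv (f (y b) - f (y a))) x i j =
      chordDensity f g (x a, x b) * coordForm2 a b i j := by
  rw [form2_unitv g (D := fun y => f (y b) - f (y a))
    ((hasFDerivAt_comp_coord hf b).sub (hasFDerivAt_comp_coord hf a)).differentiableAt
    (sub_ne_zero.2 hne.symm), chordDensity, mul_assoc, div_mul_eq_mul_div]
  simp only [pdv_chord hf, coordForm2]
  congr 2
  by_cases hbi : b = i <;> by_cases hai : a = i <;> by_cases hbj : b = j <;>
    by_cases haj : a = j <;> simp_all [det3, eq_comm] <;> ring

end ChordForm

/-- `dx₁ ∧ dx₃ ∧ dx₄ ∧ dx₂` is the volume form, up to the factor `4` from the normalisation of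
`wedge22`. -/
lemma sum_sign_mul_coordForm2 : ∑ σ : Equiv.Perm (Fin 4), (Equiv.Perm.sign σ : ℤ) *
    coordForm2 0 2 (σ 0) (σ 1) * coordForm2 3 1 (σ 2) (σ 3) = 4 := by
  decide

lemma omegaX_eq_chordDensity_mul {f : ℝ → E3} (g : E3 → ℝ) (hf : Differentiable ℝ f)
    (hinj : Function.Injective f) {x : E4} (hx : x ∈ CX) :
    omegaX f g x = chordDensity f g (x 0, x 2) * chordDensity f g (x 3, x 1) := by
  obtain ⟨h12, h23, h34⟩ := hx
  have hne₁₃ : f (x 0) ≠ f (x 2) := hinj.ne (h12.trans h23).ne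
  have hne₄₂ : f (x 3) ≠ f (x 1) := hinj.ne (h23.trans h34).ne'
  have hsum : ∑ σ : Equiv.Perm (Fin 4), ((Equiv.Perm.sign σ : ℤ) : ℝ) *
      coordForm2 0 2 (σ 0) (σ 1) * coordForm2 3 1 (σ 2) (σ 3) = 4 := by
    exact_mod_cast sum_sign_mul_coordForm2
  calc omegaX f g x = 1 / 4 * ((∑ σ : Equiv.Perm (Fin 4), ((Equiv.Perm.sign σ : ℤ) : ℝ) *
        coordForm2 0 2 (σ 0) (σ 1) * coordForm2 3 1 (σ 2) (σ 3)) *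
          (chordDensity f g (x 0, x 2) * chordDensity f g (x 3, x 1))) := by
        simp only [omegaX, wedge22, form2_chord g hf (by decide : (0 : Fin 4) ≠ 2) hne₁₃,
          form2_chord g hf (by decide : (3 : Fin 4) ≠ 1) hne₄₂, Finset.sum_mul]
        congr 1
        exact Finset.sum_congr rfl fun σ _ => by ring
    _ = chordDensity f g (x 0, x 2) * chordDensity f g (x 3, x 1) := by
        rw [hsum]
        ring

/-- The configuration `(x₁, x₂, x₃, x₄)` that consists of the two chords `(x₁, x₃)` and
`(x₄, x₂)`. -/
def chordConfig (q : (ℝ × ℝ) × (ℝ × ℝ)) : E4 := WithLp.toLp 2 ![q.1.1, q.2.2, q.1.2, q.2.1]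

lemma preimage_chordConfig_CX : chordConfig ⁻¹' CX = interlaced := rfl

lemma measurePreserving_chordConfig : MeasurePreserving chordConfig := by
  refine measurePreserving_toLp_of_box
    (T := fun q : (ℝ × ℝ) × (ℝ × ℝ) => ![q.1.1, q.2.2, q.1.2, q.2.1])
    (measurable_pi_iff.2 fun i => by fin_cases i <;> dsimp <;> fun_prop) fun s => ?_
  have hpre : (fun q : (ℝ × ℝ) × (ℝ × ℝ) => ![q.1.1, q.2.2, q.1.2, q.2.1]) ⁻¹' univ.pi s =
      (s 0 ×ˢ s 2) ×ˢ (s 3 ×ˢ s 1) := by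
    ext q
    simp only [mem_preimage, mem_prod, Set.mem_pi, mem_univ, forall_const, Fin.forall_fin_succ,
      Fin.succ_zero_eq_one, Fin.succ_one_eq_two, Fin.reduceSucc, Matrix.cons_val_zero,
      Matrix.cons_val_succ, Matrix.cons_val_fin_one, IsEmpty.forall_iff, and_true]
    tauto
  simp only [hpre, Measure.volume_eq_prod, Measure.prod_prod, Fin.prod_univ_four]
  ring

lemma measurableEmbedding_chordConfig : MeasurableEmbedding chordConfig := by
  have hcont : Continuous chordConfig :=
    (PiLp.continuous_toLp 2 _).comp <| continuous_pi fun i => by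
      fin_cases i <;> dsimp <;> fun_prop
  have hinv : Function.LeftInverse (fun x : E4 => ((x 0, x 2), (x 3, x 1))) chordConfig :=
    fun _ => rfl
  exact hcont.measurableEmbedding hinv.injective

theorem IX_eq_setIntegral_chordDensity_mul {f : ℝ → E3} (g : E3 → ℝ) (hf : Differentiable ℝ f)
    (hinj : Function.Injective f) :
    IX f g = ∫ q in interlaced, chordDensity f g q.1 * chordDensity f g q.2 := by
  rw [IX, ← measurePreserving_chordConfig.setIntegral_preimage_emb measurableEmbedding_chordConfig,
    preimage_chordConfig_CX]
  exact setIntegral_congr_fun isOpen_interlaced.measurableSet fun q hq =>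
    omegaX_eq_chordDensity_mul g hf hinj (x := chordConfig q) hq

/-! ### Localization at crossings -/

section Localization
variable {f : ℝ → E3} {R : ℝ}

/-- The densities on `S²` that are integrable and supported close to the north pole. -/
def integrablePolarFilter : Filter (E3 → ℝ) :=
  polarFilter ⊓ 𝓟 {g | Integrable (fun v : Metric.sphere (0 : E3) 1 => g v) areaS2}

lemma eventually_integrablePolarFilter_iff {P : (E3 → ℝ) → Prop} :
    (∀ᶠ g in integrablePolarFilter, P g) ↔ ∀ᶠ g in polarFilter,
      Integrable (fun v : Metric.sphere (0 : E3) 1 => g v) areaS2 → P g :=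
  eventually_inf_principal

lemma exists_isOpen_setIntegral_chordDensity_mul (hf : ContDiff ℝ 1 f) (hT : TransverseK f)
    {q : (ℝ × ℝ) × (ℝ × ℝ)} (hq₁ : q.1 ∈ CrossingK f) (hq₂ : q.2 ∈ CrossingK f)
    {O : Set ((ℝ × ℝ) × (ℝ × ℝ))} (hO : O ∈ 𝓝 q) :
    ∃ W ⊆ O, IsOpen W ∧ q ∈ W ∧ ∀ᶠ g in integrablePolarFilter,
      IntegrableOn (fun r => chordDensity f g r.1 * chordDensity f g r.2) W ∧
        ∫ r in W, chordDensity f g r.1 * chordDensity f g r.2 =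
          (∫ v : Metric.sphere (0 : E3) 1, g v ∂areaS2) ^ 2 * (csignK f q.1 * csignK f q.2) := by
  obtain ⟨O₁, hO₁, O₂, hO₂, hsub⟩ := mem_nhds_prod_iff.1 hO
  obtain ⟨U, hUO, hU, hqU, hintU⟩ := exists_isOpen_setIntegral_chordDensity hf hT hq₁ hO₁
  obtain ⟨V, hVO, hV, hqV, hintV⟩ := exists_isOpen_setIntegral_chordDensity hf hT hq₂ hO₂
  refine ⟨U ×ˢ V, (prod_mono hUO hVO).trans hsub, hU.prod hV, ⟨hqU, hqV⟩, ?_⟩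
  rw [eventually_integrablePolarFilter_iff]
  filter_upwards [hintU, hintV] with g hgU hgV hg
  rw [Measure.volume_eq_prod, IntegrableOn, ← Measure.prod_restrict]
  refine ⟨(hgU hg).1.mul_prod (hgV hg).1, ?_⟩
  rw [integral_prod_mul (chordDensity f g) (chordDensity f g), (hgU hg).2, (hgV hg).2]
  ring

lemma eventually_chordDensity_mul_eq_zero (hf : ContDiff ℝ 1 f) (hinj : Function.Injective f)
    (himm : ∀ t, deriv f t ≠ 0) (hend : ∀ x, R ≤ |x| → f x = mk3 x 0 0) (hD : OnlyDoubleK f)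
    {U : Set ((ℝ × ℝ) × (ℝ × ℝ))} (hU : IsOpen U) (hXU : crossingPairsX f ⊆ U) :
    ∀ᶠ g in polarFilter, ∀ q ∈ interlaced \ U, chordDensity f g q.1 * chordDensity f g q.2 = 0 := by
  obtain ⟨e, he, hsub⟩ := exists_pos_steepPairs_subset hf hinj himm hend hD hU hXU
  filter_upwards [eventually_polarFilter_steep he] with g hg q ⟨⟨h12, h23, h34⟩, hqU⟩
  by_contra hne
  have hsteep (p : ℝ × ℝ) (hp : p.1 ≠ p.2) (h : chordDensity f g p ≠ 0) :
      Steep e (f p.2 - f p.1) :=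
    hg _ (sub_ne_zero.2 (hinj.ne hp.symm)) (left_ne_zero_of_mul h)
  have h13 : Steep e (dslope f q.1.1 q.1.2) := (steep_dslope_iff (h12.trans h23)).2 <|
    hsteep q.1 (h12.trans h23).ne (left_ne_zero_of_mul hne)
  have h42 : Steep e (-dslope f q.2.2 q.2.1) := (steep_neg_dslope_iff (h23.trans h34)).2 <|
    hsteep q.2 (h23.trans h34).ne' (right_ne_zero_of_mul hne)
  rw [dslope_comm] at h42
  exact hqU (hsub ⟨⟨h12.le, h23.le, h34.le⟩, h13, h42⟩)

theorem eventually_IX_eq_sq_mul_pairXK (hf : ContDiff ℝ 1 f) (hinj : Function.Injective f)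
    (himm : ∀ t, deriv f t ≠ 0) (hend : ∀ x, R ≤ |x| → f x = mk3 x 0 0) (hD : OnlyDoubleK f) :
    ∀ᶠ g in integrablePolarFilter,
      IX f g = (∫ v : Metric.sphere (0 : E3) 1, g v ∂areaS2) ^ 2 * pairXK f := by
  have hfin := finite_crossingPairsX hf hinj himm hend hD
  have hsum := eventually_setIntegral_eq_finsum_mem hfin isOpen_interlaced (fun q hq => hq.2.2)
    (fun q hq O hO => exists_isOpen_setIntegral_chordDensity_mul hf hD.1 hq.1 hq.2.1 hO)
    (fun U hU hXU => (eventually_chordDensity_mul_eq_zero hf hinj himm hend hD hU hXU).filter_mono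
      inf_le_left)
  filter_upwards [hsum] with g hg
  rw [IX_eq_setIntegral_chordDensity_mul g (hf.differentiable one_ne_zero) hinj, hg]
  exact (mul_finsum_mem _ _).symm

theorem statement11_general (hf : ContDiff ℝ 1 f) (hinj : Function.Injective f)
    (himm : ∀ t, deriv f t ≠ 0) (hend : ∀ x, R ≤ |x| → f x = mk3 x 0 0) (hD : OnlyDoubleK f) :
    ∃ ε₀ > 0, ∀ g : E3 → ℝ, (∀ v, ‖v‖ = 1 → g v ≠ 0 → ‖v - NP‖ < ε₀) →
      IY f g = 0 ∧ (Integrable (fun v : Metric.sphere (0 : E3) 1 => g v) areaS2 →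
        IX f g = (∫ v : Metric.sphere (0 : E3) 1, g v ∂areaS2) ^ 2 * pairXK f) :=
  eventually_polarFilter_iff.1 <| (eventually_polarFilter_IY_eq_zero hf hinj himm hend hD).and <|
    eventually_integrablePolarFilter_iff.1 (eventually_IX_eq_sq_mul_pairXK hf hinj himm hend hD)

lemma exists_forall_isEtaForm_IX_eq_and_IY_eq_zero (hf : IsLongKnot f) (hD : OnlyDoubleK f) :
    ∃ ε₀ > 0, ∀ ε : ℝ, ε < ε₀ → ∀ g : E3 → ℝ, IsEtaForm ε g →
      IX f g = pairXK f ∧ IY f g = 0 := by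
  obtain ⟨hsmooth, hinj, himm, hend⟩ := hf
  obtain ⟨ε₀, hε₀, H⟩ := statement11_general (hsmooth.of_le (by simp)) hinj himm hend hD
  refine ⟨ε₀, hε₀, fun ε hε g ⟨_, hsupp, _, hint⟩ => ?_⟩
  obtain ⟨hIY, hIX⟩ := H g fun v hv hgv => (hsupp v hv hgv).trans hε
  refine ⟨?_, hIY⟩
  rw [hIX (.of_integral_ne_zero (hint.trans_ne one_ne_zero)), hint, one_pow, one_mul]

end Localization

/-- localization of the knot integrals at double crossings. Let `f`
be a long knot whose diagram has only transverse double crossings. Then, with `η = η_ε`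
a 2-form as specified for each `ε`, one has `lim_{ε→0} I_X(f) = ⟨X, G_D⟩`, and for all
sufficiently small `ε > 0` one has `I_Y(f) = 0`. -/
theorem statement11 (f : ℝ → E3) (hf : IsLongKnot f) (hD : OnlyDoubleK f) :
    (∀ G : ℝ → E3 → ℝ, (∀ ε : ℝ, 0 < ε → IsEtaForm ε (G ε)) →
      Tendsto (fun ε => IX f (G ε)) (𝓝[>] 0) (𝓝 (pairXK f))) ∧
    ∃ ε₀ > (0 : ℝ), ∀ ε : ℝ, 0 < ε → ε < ε₀ → ∀ g : E3 → ℝ, IsEtaForm ε g →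
      IY f g = 0 := by
  obtain ⟨ε₀, hε₀, H⟩ := exists_forall_isEtaForm_IX_eq_and_IY_eq_zero hf hD
  refine ⟨fun G hG => tendsto_const_nhds.congr' ?_, ε₀, hε₀, fun ε _ hε g hg => (H ε hε g hg).2⟩
  filter_upwards [Ioo_mem_nhdsGT hε₀] with ε hε using (H ε hε.2 (G ε) (hG ε hε.1)).1.symm

end
end

section
/- For every choice of signs s₁, s₂, s₃ ∈ {+1, −1}, every model triple point of type (←, s₁, s₂, s₃) or (→, s₁, s₂, s₃), and all sufficiently small ε > 0, the Y-graph integrals over the model vanish: I_Y^{←,s₁,s₂,s₃} = I_Y^{→,s₁,s₂,s₃} = 0. -/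
open MeasureTheory Filter Topology Set

noncomputable section

/-! Let `R` be the rotation by `π` about the vertical line through the triple point. The strands of
the model are horizontal and centred on this line, so `R` carries each of them to itself with `t`
replaced by `-t`. Hence the half-turn `(t, x₄) ↦ (-t, R x₄)` is an isometry of `ℝ³ × ℝ³` preserving
the domain of integration, and it intertwines the maps `h₁₄`, `h₄₂`, `h₃₄` with the linear part of
`R`. That linear part lies in `SO(2)`, so it preserves `η`, and the half-turn preserves
`h₁₄*η ∧ h₄₂*η ∧ h₃₄*η`. But the half-turn has determinant `-1`, because `t ↦ -t` reverses
the orientation of `ℝ³` while `R` preserves it. So the integral equals its negative. -/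

open Function Module

section MeasureAndDerivative

theorem setIntegral_eq_zero_of_comp_eq_neg {α F : Type*} [MeasurableSpace α]
    [NormedAddCommGroup F] [NormedSpace ℝ F] {μ : Measure α} {T : α → α} {f : α → F} {s : Set α}
    (hT : MeasurePreserving T μ μ) (hemb : MeasurableEmbedding T) (hs : T ⁻¹' s = s)
    (hf : ∀ x, f (T x) = -f x) : ∫ x in s, f x ∂μ = 0 := by
  have h := hT.setIntegral_preimage_emb hemb f s
  simp only [hs, hf, integral_neg] at h
  have : IsAddTorsionFree F := .of_isTorsionFree ℝ F
  exact neg_eq_self.mp h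

theorem measurePreserving_affineIsometryEquiv {V : Type*} [NormedAddCommGroup V]
    [InnerProductSpace ℝ V] [FiniteDimensional ℝ V] [MeasurableSpace V] [BorelSpace V]
    (Φ : V ≃ᵃⁱ[ℝ] V) : MeasurePreserving Φ := by
  simpa only [InnerProductSpace.euclideanHausdorffMeasure_eq_volume] using!
    Φ.toIsometryEquiv.measurePreserving_euclideanHausdorffMeasure (finrank ℝ V)

variable {V F : Type*} [NormedAddCommGroup V] [NormedSpace ℝ V] [NormedAddCommGroup F]
  [NormedSpace ℝ F]

-- As `Φ` is invertible, the junk value `0` of `fderiv` occurs on both sides or on neither.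
theorem fderiv_comp_affineIsometryEquiv (Φ : V ≃ᵃⁱ[ℝ] V) (f : V → F) (x : V) :
    fderiv ℝ (f ∘ Φ) x =
      (fderiv ℝ f (Φ x)).comp (Φ.linearIsometryEquiv.toContinuousLinearEquiv : V →L[ℝ] V) := by
  have hΦ : ⇑Φ = fun y ↦ Φ.linearIsometryEquiv y + Φ 0 := by
    ext y
    simpa using Φ.map_vadd 0 y
  have h := Φ.linearIsometryEquiv.toContinuousLinearEquiv.comp_right_fderiv
    (f := fun y ↦ f (y + Φ 0)) (x := x)
  rw [fderiv_comp_add_right] at h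
  rw [hΦ]
  exact h

theorem fderiv_apply_of_semiconj {Φ : V ≃ᵃⁱ[ℝ] V} {R : F ≃L[ℝ] F} {f : V → F}
    (hf : Semiconj f Φ R) (x u : V) :
    fderiv ℝ f (Φ x) (Φ.linearIsometryEquiv u) = R (fderiv ℝ f x u) := by
  have h := fderiv_comp_affineIsometryEquiv Φ f x
  rw [hf.comp_eq, R.comp_fderiv] at h
  exact (DFunLike.congr_fun h u).symm

end MeasureAndDerivative

section AxisReflection

variable {ι : Type*} [Fintype ι] [DecidableEq ι]

/-- The orthogonal reflection of `ℝ^ι` in its `i`-th coordinate axis; in `ℝ³` this is the rotation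
by `π` about that axis. -/
def axisReflection (i : ι) : EuclideanSpace ℝ ι ≃ₗᵢ[ℝ] EuclideanSpace ℝ ι :=
  (ℝ ∙ EuclideanSpace.single i (1 : ℝ)).reflection

theorem axisReflection_apply (i : ι) (x : EuclideanSpace ℝ ι) (j : ι) :
    axisReflection i x j = if j = i then x j else -x j := by
  rw [axisReflection, Submodule.reflection_singleton_apply]
  split_ifs with hj
  · subst hj
    simp [EuclideanSpace.inner_single_left, two_mul]
  · simp [hj]

theorem det_axisReflection (i : ι) :
    LinearMap.det (axisReflection i).toLinearMap = (-1) ^ (Fintype.card ι - 1) := by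
  have hrank := (ℝ ∙ EuclideanSpace.single i (1 : ℝ)).finrank_add_finrank_orthogonal
  rw [finrank_span_singleton (by simp), finrank_euclideanSpace] at hrank
  rw [axisReflection, Submodule.det_reflection]
  congr 1
  omega

/-- The orthogonal reflection of `ℝ^ι` in the line through `p` parallel to the `i`-th coordinate
axis. -/
def axisReflectionAt (p : EuclideanSpace ℝ ι) (i : ι) :
    EuclideanSpace ℝ ι ≃ᵃⁱ[ℝ] EuclideanSpace ℝ ι :=
  EuclideanGeometry.reflection (AffineSubspace.mk' p (ℝ ∙ EuclideanSpace.single i (1 : ℝ)))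

theorem axisReflectionAt_eq_axisReflection_sub_add (p : EuclideanSpace ℝ ι) (i : ι)
    (x : EuclideanSpace ℝ ι) : axisReflectionAt p i x = axisReflection i (x - p) + p := by
  simpa only [AffineSubspace.direction_mk'] using! EuclideanGeometry.reflection_apply_of_mem _ x
    (AffineSubspace.self_mem_mk' p (ℝ ∙ EuclideanSpace.single i (1 : ℝ)))

theorem linearIsometryEquiv_axisReflectionAt (p : EuclideanSpace ℝ ι) (i : ι) :
    (axisReflectionAt p i).linearIsometryEquiv = axisReflection i := by
  ext1 x
  have h := (axisReflectionAt p i).map_vadd p x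
  simpa [axisReflectionAt_eq_axisReflection_sub_add, eq_comm] using h

theorem axisReflectionAt_apply (p : EuclideanSpace ℝ ι) (i : ι) (x : EuclideanSpace ℝ ι) (j : ι) :
    axisReflectionAt p i x j = if j = i then x j else 2 * p j - x j := by
  rw [axisReflectionAt_eq_axisReflection_sub_add, PiLp.add_apply, axisReflection_apply]
  split_ifs
  · simp
  · simp only [PiLp.sub_apply]
    ring

end AxisReflection

section Forms

theorem alternatingMap_comp_basis {R M ι : Type*} [CommRing R] [AddCommGroup M] [Module R M]
    [Finite ι] (f : M [⋀^ι]→ₗ[R] R) (e : Basis ι R M) (L : M →ₗ[R] M) :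
    f (L ∘ e) = LinearMap.det L * f e := by
  classical
  have := Fintype.ofFinite ι
  rw [f.eq_smul_basis_det e]
  simp only [AlternatingMap.smul_apply, smul_eq_mul, Basis.det_comp]
  exact mul_left_comm _ _ _

theorem det3_eq_det (p v w : E3) :
    det3 p v w = (EuclideanSpace.basisFun (Fin 3) ℝ).toBasis.det ![p, v, w] := by
  rw [Basis.det_apply, Matrix.det_fin_three]
  simp only [det3, Basis.toMatrix_apply, OrthonormalBasis.coe_toBasis_repr_apply,
    EuclideanSpace.basisFun_repr, Matrix.cons_val]
  ring

theorem det3_map (R : E3 →ₗ[ℝ] E3) (p v w : E3) :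
    det3 (R p) (R v) (R w) = LinearMap.det R * det3 p v w := by
  rw [det3_eq_det, det3_eq_det, ← Basis.det_comp]
  congr 1
  ext i
  fin_cases i <;> rfl

/-- The multilinear form `B₀ ⊗ B₁ ⊗ B₂`. -/
def tensorTriple {R M : Type*} [CommRing R] [AddCommGroup M] [Module R M]
    (B : Fin 3 → LinearMap.BilinForm R M) : MultilinearMap R (fun _ : Fin 6 ↦ M) R :=
  MultilinearMap.mk' (fun v ↦ B 0 (v 0) (v 1) * B 1 (v 2) (v 3) * B 2 (v 4) (v 5))
    (fun v i x y ↦ by fin_cases i <;> simp <;> ring)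
    (fun v i c x ↦ by fin_cases i <;> simp <;> ring)

/-- The wedge product `B₀ ∧ B₁ ∧ B₂` of three 2-forms. The factor is `1 / (2!)³`, as in
`wedge222`. -/
def wedgeTriple {M : Type*} [AddCommGroup M] [Module ℝ M] (B : Fin 3 → LinearMap.BilinForm ℝ M) :
    M [⋀^Fin 6]→ₗ[ℝ] ℝ :=
  (1 / 8 : ℝ) • MultilinearMap.alternatization (tensorTriple B)

theorem wedgeTriple_apply {M : Type*} [AddCommGroup M] [Module ℝ M]
    (B : Fin 3 → LinearMap.BilinForm ℝ M) (v : Fin 6 → M) :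
    wedgeTriple B v = (1 / 8) * ∑ σ : Equiv.Perm (Fin 6), ((Equiv.Perm.sign σ : ℤ) : ℝ) *
      B 0 (v (σ 0)) (v (σ 1)) * B 1 (v (σ 2)) (v (σ 3)) * B 2 (v (σ 4)) (v (σ 5)) := by
  simp [wedgeTriple, tensorTriple, MultilinearMap.alternatization_apply, Units.smul_def, mul_assoc]

theorem wedgeTriple_comp {M M' : Type*} [AddCommGroup M] [Module ℝ M] [AddCommGroup M']
    [Module ℝ M'] {B : Fin 3 → LinearMap.BilinForm ℝ M} {B' : Fin 3 → LinearMap.BilinForm ℝ M'}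
    {L : M' → M} {c : ℝ} (hB : ∀ k u w, B k (L u) (L w) = c * B' k u w) (v : Fin 6 → M') :
    wedgeTriple B (L ∘ v) = c ^ 3 * wedgeTriple B' v := by
  simp only [wedgeTriple_apply, comp_apply, hB, Finset.mul_sum]
  exact Finset.sum_congr rfl fun σ _ ↦ by ring

variable {V : Type*} [NormedAddCommGroup V] [NormedSpace ℝ V]

/-- The pullback `h*η` at `x` of the 2-form `η = g · (area form)` on `S²`, as a bilinear form. -/
def pullbackEta (g : E3 → ℝ) (h : V → E3) (x : V) : LinearMap.BilinForm ℝ V :=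
  LinearMap.mk₂ ℝ (fun u w ↦ g (h x) * det3 (h x) (fderiv ℝ h x u) (fderiv ℝ h x w))
    (fun u u' w ↦ by simp [det3]; ring) (fun c u w ↦ by simp [det3]; ring)
    (fun u w w' ↦ by simp [det3]; ring) (fun c u w ↦ by simp [det3]; ring)

theorem pullbackEta_of_semiconj {Φ : V ≃ᵃⁱ[ℝ] V} {R : E3 ≃L[ℝ] E3} {g : E3 → ℝ} {h : V → E3}
    (hh : Semiconj h Φ R) (hg : ∀ x, g (R (h x)) = g (h x)) (x u w : V) :
    pullbackEta g h (Φ x) (Φ.linearIsometryEquiv u) (Φ.linearIsometryEquiv w) =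
      LinearMap.det R.toLinearMap * pullbackEta g h x u w := by
  simp only [pullbackEta, LinearMap.mk₂_apply, fderiv_apply_of_semiconj hh, hh x, hg]
  rw [mul_left_comm, ← det3_map]
  rfl

theorem wedge222_eq_wedgeTriple (g : E3 → ℝ) (h : Fin 3 → E6 → E3) (x : E6) :
    wedge222 g (h 0) (h 1) (h 2) x =
      wedgeTriple (fun k ↦ pullbackEta g (h k) x) (EuclideanSpace.basisFun (Fin 6) ℝ).toBasis := by
  simp [wedgeTriple_apply, wedge222, form2, pdv, pullbackEta]

theorem det_mul_wedge222_of_semiconj {Φ : E6 ≃ᵃⁱ[ℝ] E6} {R : E3 ≃L[ℝ] E3} {g : E3 → ℝ}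
    {h : Fin 3 → E6 → E3} (hh : ∀ k, Semiconj (h k) Φ R)
    (hg : ∀ k x, g (R (h k x)) = g (h k x)) (x : E6) :
    LinearMap.det Φ.linearIsometryEquiv.toLinearMap * wedge222 g (h 0) (h 1) (h 2) (Φ x) =
      LinearMap.det R.toLinearMap ^ 3 * wedge222 g (h 0) (h 1) (h 2) x := by
  set e := (EuclideanSpace.basisFun (Fin 6) ℝ).toBasis
  calc LinearMap.det Φ.linearIsometryEquiv.toLinearMap * wedge222 g (h 0) (h 1) (h 2) (Φ x)
    _ = wedgeTriple (fun k ↦ pullbackEta g (h k) (Φ x)) (Φ.linearIsometryEquiv ∘ e) := by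
      rw [wedge222_eq_wedgeTriple, ← alternatingMap_comp_basis, LinearEquiv.coe_coe,
        LinearIsometryEquiv.coe_toLinearEquiv]
    _ = LinearMap.det R.toLinearMap ^ 3 * wedgeTriple (fun k ↦ pullbackEta g (h k) x) e := by
      rw [wedgeTriple_comp fun k ↦ pullbackEta_of_semiconj (hh k) (hg k) x]
    _ = LinearMap.det R.toLinearMap ^ 3 * wedge222 g (h 0) (h 1) (h 2) x := by
      rw [wedge222_eq_wedgeTriple]

theorem setIntegral_wedge222_eq_zero {Φ : E6 ≃ᵃⁱ[ℝ] E6} {R : E3 ≃L[ℝ] E3} {g : E3 → ℝ}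
    {h : Fin 3 → E6 → E3} {s : Set E6} (hh : ∀ k, Semiconj (h k) Φ R)
    (hg : ∀ k x, g (R (h k x)) = g (h k x)) (hs : Φ ⁻¹' s = s)
    (hR : LinearMap.det R.toLinearMap = 1)
    (hΦ : LinearMap.det Φ.linearIsometryEquiv.toLinearMap = -1) :
    ∫ x in s, wedge222 g (h 0) (h 1) (h 2) x = 0 := by
  refine setIntegral_eq_zero_of_comp_eq_neg (measurePreserving_affineIsometryEquiv Φ)
    Φ.toHomeomorph.measurableEmbedding hs fun x ↦ ?_
  have h := det_mul_wedge222_of_semiconj hh hg x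
  rw [hΦ, hR] at h
  linarith

end Forms

section Model

theorem axisReflection_two_eq_act2 (u : E3) : axisReflection 2 u = act2 (-1) u := by
  ext i
  fin_cases i <;> simp [axisReflection_apply, act2, mk3]

theorem semiconj_unitv_comp {α : Type*} {T : α → α} {R : E3 ≃ₗᵢ[ℝ] E3} {w : α → E3}
    (hw : Semiconj w T R) : Semiconj (unitv ∘ w) T R := fun x ↦ by
  simp [unitv, hw x]

theorem comp_unitv_eq_of_sphere {R : E3 ≃ₗᵢ[ℝ] E3} {g : E3 → ℝ}
    (hg : ∀ u, ‖u‖ = 1 → g (R u) = g u) (w : E3) : g (R (unitv w)) = g (unitv w) := by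
  obtain rfl | hw := eq_or_ne w 0
  · simp [unitv]
  · exact hg _ (by simp [unitv, norm_smul, hw])

/-- The vector `x₄ - f_k(t_k)` from the `k`-th strand of the model to the free point, as a function
of the configuration `(t₁, t₂, t₃; x₄)`. -/
def strandOffset (a v : Fin 3 → E3) (k : Fin 3) (x : E6) : E3 :=
  ptY x - seg (a k) (v k) (x (k.castLE (by decide)))

/-- The maps `h₁₄`, `h₄₂`, `h₃₄` of the model, indexed by the strand. -/
def edgeDirection (a v : Fin 3 → E3) : Fin 3 → E6 → E3 :=
  ![unitv ∘ strandOffset a v 0, unitv ∘ (-strandOffset a v 1), unitv ∘ strandOffset a v 2]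

/-- The domain of integration of `IYmodel`. -/
def modelConfigurations (a v : Fin 3 → E3) (δ : ℝ) : Set E6 :=
  {x | ∀ k : Fin 3, |x (k.castLE (by decide))| < δ ∧ strandOffset a v k x ≠ 0}

theorem IYmodel_eq_setIntegral (a v : Fin 3 → E3) (δ : ℝ) (g : E3 → ℝ) :
    IYmodel a v δ g = ∫ x in modelConfigurations a v δ,
      wedge222 g (edgeDirection a v 0) (edgeDirection a v 1) (edgeDirection a v 2) x := by
  have hdom : modelConfigurations a v δ =
      {x : E6 | |x 0| < δ ∧ |x 1| < δ ∧ |x 2| < δ ∧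
        ptY x ≠ seg (a 0) (v 0) (x 0) ∧ ptY x ≠ seg (a 1) (v 1) (x 1) ∧
        ptY x ≠ seg (a 2) (v 2) (x 2)} := by
    ext x
    simp only [modelConfigurations, strandOffset, ne_eq, sub_eq_zero, Fin.forall_fin_succ,
      Fin.castLE_zero, Fin.castLE_succ, Fin.succ_zero_eq_one, Fin.succ_one_eq_two,
      IsEmpty.forall_iff, and_true, mem_ofPred_eq]
    tauto
  have hmid : edgeDirection a v 1 = fun x ↦ unitv (seg (a 1) (v 1) (x 1) - ptY x) := by
    ext1 x
    simp [edgeDirection, strandOffset]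
  rw [hdom, hmid]
  rfl

/-- The half-turn `(t, x₄) ↦ (-t, R x₄)` of the configuration space induced by the rotation `R` by
`π` about the vertical line over `c`. -/
def modelHalfTurn (c : ℝ × ℝ) : E6 ≃ᵃⁱ[ℝ] E6 :=
  axisReflectionAt !₂[0, 0, 0, c.1, c.2, 0] 5

variable {a v : Fin 3 → E3} {c : ℝ × ℝ}

theorem modelHalfTurn_apply_castLE (c : ℝ × ℝ) (x : E6) (k : Fin 3) :
    modelHalfTurn c x (k.castLE (by decide)) = -x (k.castLE (by decide)) := by
  fin_cases k <;> simp [modelHalfTurn, axisReflectionAt_apply]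

theorem semiconj_strandOffset (hv : ∀ k, v k 2 = 0) (ha : ∀ k, pr12 (a k) = c) (k : Fin 3) :
    Semiconj (strandOffset a v k) (modelHalfTurn c) (axisReflection 2) := by
  intro x
  rw [strandOffset, modelHalfTurn_apply_castLE, ← ha k, strandOffset]
  ext j
  fin_cases j <;>
    simp [ptY, mk3, seg, pr12, modelHalfTurn, axisReflectionAt_apply, axisReflection_apply, hv] <;>
    ring

theorem semiconj_edgeDirection (hv : ∀ k, v k 2 = 0) (ha : ∀ k, pr12 (a k) = c) (k : Fin 3) :
    Semiconj (edgeDirection a v k) (modelHalfTurn c) (axisReflection 2) := by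
  have hoff := semiconj_strandOffset hv ha
  have hneg : Semiconj (-strandOffset a v 1) (modelHalfTurn c) (axisReflection 2) := fun x ↦ by
    simp [hoff 1 x]
  fin_cases k
  exacts [semiconj_unitv_comp (hoff 0), semiconj_unitv_comp hneg, semiconj_unitv_comp (hoff 2)]

theorem modelHalfTurn_preimage_modelConfigurations (hv : ∀ k, v k 2 = 0)
    (ha : ∀ k, pr12 (a k) = c) (δ : ℝ) :
    modelHalfTurn c ⁻¹' modelConfigurations a v δ = modelConfigurations a v δ := by
  ext x
  simp [modelConfigurations, modelHalfTurn_apply_castLE, semiconj_strandOffset hv ha _ x]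

theorem comp_edgeDirection_eq_of_sphere {R : E3 ≃ₗᵢ[ℝ] E3} {g : E3 → ℝ}
    (hg : ∀ u, ‖u‖ = 1 → g (R u) = g u) (k : Fin 3) (x : E6) :
    g (R (edgeDirection a v k x)) = g (edgeDirection a v k x) := by
  fin_cases k <;> exact comp_unitv_eq_of_sphere hg _

theorem det_modelHalfTurn (c : ℝ × ℝ) :
    LinearMap.det (modelHalfTurn c).linearIsometryEquiv.toLinearMap = -1 := by
  rw [modelHalfTurn, linearIsometryEquiv_axisReflectionAt, det_axisReflection]
  norm_num

theorem statement12_general (a v : Fin 3 → E3) (c : ℝ × ℝ) (hv : ∀ k, v k 2 = 0)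
    (ha : ∀ k, pr12 (a k) = c) (δ : ℝ) (g : E3 → ℝ)
    (hg : ∀ u, ‖u‖ = 1 → g (act2 (-1) u) = g u) : IYmodel a v δ g = 0 := by
  have hinv : ∀ u, ‖u‖ = 1 → g (axisReflection 2 u) = g u := fun u hu ↦ by
    rw [axisReflection_two_eq_act2, hg u hu]
  have hdet : LinearMap.det (axisReflection (2 : Fin 3)).toLinearMap = 1 := by
    norm_num [det_axisReflection]
  rw [IYmodel_eq_setIntegral]
  exact setIntegral_wedge222_eq_zero (R := (axisReflection 2).toContinuousLinearEquiv)
    (semiconj_edgeDirection hv ha) (comp_edgeDirection_eq_of_sphere hinv)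
    (modelHalfTurn_preimage_modelConfigurations hv ha δ) hdet (det_modelHalfTurn c)

end Model

/-- vanishing of the model `Y`-integrals at triple points. For every
choice of signs `s₁, s₂, s₃ ∈ {+1, -1}`, every model triple point of type
`(←, s₁, s₂, s₃)` or `(→, s₁, s₂, s₃)` and all sufficiently small `ε > 0`, the `Y`-graph
integral over the model vanishes: `I_Y^{←,s₁,s₂,s₃} = I_Y^{→,s₁,s₂,s₃} = 0`. -/
theorem statement12 (s1 s2 s3 : ℝ) (h1 : s1 = 1 ∨ s1 = -1) (h2 : s2 = 1 ∨ s2 = -1)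
    (h3 : s3 = 1 ∨ s3 = -1) (a v : Fin 3 → E3) (δ : ℝ) (hδ : 0 < δ)
    (hM : ModelLeft a v s1 s2 s3 ∨ ModelRight a v s1 s2 s3) :
    ∃ ε₀ > (0 : ℝ), ∀ ε : ℝ, 0 < ε → ε < ε₀ → ∀ g : E3 → ℝ, IsEtaForm ε g →
      IYmodel a v δ g = 0 := by
  obtain ⟨hv, -, h01, h12, -⟩ : IsModelTriple a v := hM.elim And.left And.left
  exact ⟨1, one_pos, fun ε _ _ g hg ↦ statement12_general a v (pr12 (a 1)) hv
    (Fin.forall_fin_succ.mpr ⟨h01, by simp [h12]⟩) δ g (hg.2.2.1 (-1) (by simp))⟩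

end
end
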